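/- Let (X_A, μ) be a topologically mixing Markov subshift of finite type satisfying the Doeblin condition, with the left shift T nonsingular with respect to μ. If there is an admissible configuration (B_k(i_k), B'_k(j_k))_{k≥1} such that the corresponding sequence D_k = log( P_{i_k}(B'_k) P_{j_k}(B_k) / ( P_{i_k}(B_k) P_{j_k}(B'_k) ) ) satisfies D_k → 0 as k → ∞ and Σ_{k≥1} D_k² = ∞, then the ratio set of the renormalization pseudo full-group satisfies e(𝓡_A) = ℝ, i.e., every real number is an essential value of the Radon–Nikodym cocycle of 𝓡_A. -/

import Mathlib

/-!
The elements of the renormalization pseudo full-group that realize the essential values are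
products of block exchanges. For a term `k` of the configuration, let `f_k` be the involution which
exchanges `B_k` at `i_k`, `B'_k` at `j_k` with `B'_k` at `i_k`, `B_k` at `j_k` (and fixes the points
where neither pattern is present). Its log derivative is `D_k sgn_k`, where `sgn_k` is `1`, `-1` or
`0` in the three cases (`Site.map_flip`). Exchanges at different sites commute, so the product `g_n` of
the first `n` of them is an involution with log derivative `L_n = ∑_{k < n} D_k sgn_k`
(`map_multiFlip`), and `L_m ∘ g_n = -L_m` for `m ≤ n` (`logW_multiFlip`).

`g_n` is in the pseudo full-group (`exists_renormPFG`): the ratio of the derivatives of `μ ∘ T^m`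
is the exponential of the same sum for transition matrices shifted by `m`, and this tends to `1`
because nonsingularity of the shift forces `P_{n+1} - P_n → 0`. The latter
(`tendsto_transition_sub`) holds since the martingale differences
`1[x_n = s, x_{n+1} = t] - P_n(s,t) 1[x_n = s]` are orthogonal and bounded in `L²(μ)`, so that their
means under the absolutely continuous measure `μ ∘ T⁻¹` tend to `0`.

Let `r < 0` (the case `r > 0` follows by applying `g_n`, and `r = 0` is trivial). Approximate `E` by
a set `C` depending on a finite window, and use only sites outside that window with `|D_k| < ε`.
* By primitivity and the Doeblin condition, the pattern of a site has probability at least `c > 0`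
  given everything inside (`plus_bound`). Comparison of the two patterns via `f_k` then gives
  `∫_C e^{L_{n+1}/2} ≤ (1 - c (e^{D_n/2} - 1)²) ∫_C e^{L_n/2}` (`half_step`), so `∑ D_k² = ∞` yields
  `∫_C e^{L_n/2} → 0` (`Tower.tendsto_half`). Hence almost every point of `C` has `L_n ≤ r` for some
  `n`, and since the increments are smaller than `ε`, the value `L_n` comes within `ε` of `r`
  (`measure_le_hit`).
* Let `F_n` be the set where this happens for the first time at `n`. If no `g_n` returned `E` to `E`
  on `F_n`, then every point of `C ∩ F_n` would lie in `C \ E` or be mapped by `g_n` into the part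
  of `C \ E` where `L_n` is first near `-r`. Summation over `n` bounds `μ(C)` by
  `(1 + e^{-r+ε}) μ(C \ E)` (`measure_hit_le`), a contradiction if `C` approximates `E` well.
-/

open MeasureTheory Filter Topology

namespace MarkovSFT

/-- The space of two-sided sequences over `S`. -/
abbrev Seq (S : Type*) := ℤ → S

/-- The shift by `n`: `(T^n x)_k = x_{k+n}`. -/
def shiftZ {S : Type*} (n : ℤ) (x : Seq S) : Seq S := fun k => x (k + n)

/-- The left shift `T`. -/
def shiftMap {S : Type*} : Seq S → Seq S := shiftZ 1

/-- The subshift of finite type determined by the adjacency matrix `A`. -/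
def SFT {S : Type*} (A : S → S → Bool) : Set (Seq S) :=
  {x | ∀ n : ℤ, A (x n) (x (n + 1)) = true}

/-- `A` is primitive: all entries of `A^M` are positive for some `M ≥ 1`
(expressed via the existence of admissible paths of length `M`). -/
def IsPrimitive {S : Type*} (A : S → S → Bool) : Prop :=
  ∃ M : ℕ, 1 ≤ M ∧ ∀ s t : S, ∃ u : ℕ → S,
    u 0 = s ∧ u M = t ∧ ∀ i < M, A (u i) (u (i + 1)) = true

/-- A stochastic matrix over the finite state space `S`. -/
def IsStochastic {S : Type*} [Fintype S] (P : S → S → ℝ) : Prop :=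
  (∀ s t, 0 ≤ P s t) ∧ ∀ s, ∑ t, P s t = 1

/-- The Doeblin condition for the family of transition matrices `P` relative to `A`. -/
def Doeblin {S : Type*} (A : S → S → Bool) (P : ℤ → S → S → ℝ) : Prop :=
  ∃ δ : ℝ, 0 < δ ∧ ∀ (n : ℤ) (s t : S), δ ≤ P n s t ↔ A s t = true

/-- `μ` is the Markov measure on the SFT `X_A` determined by the transition
matrices `(P n)` and coordinate distributions `(π n)`. -/
structure IsMarkovMeasure {S : Type*} [Fintype S] [MeasurableSpace S]
    (μ : Measure (Seq S)) (A : S → S → Bool)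
    (P : ℤ → S → S → ℝ) (π : ℤ → S → ℝ) : Prop where
  isProb : IsProbabilityMeasure μ
  stochastic : ∀ n, IsStochastic (P n)
  compat : ∀ (n : ℤ) (s t : S), A s t = false → P n s t = 0
  dist_nonneg : ∀ (n : ℤ) (s : S), 0 ≤ π n s
  dist_sum : ∀ n : ℤ, ∑ s, π n s = 1
  consistent : ∀ (n : ℤ) (t : S), ∑ s, π n s * P n s t = π (n + 1) t
  supp : μ (SFT A) = 1
  cylinder : ∀ (k : ℤ) (m : ℕ) (w : Fin (m + 1) → S),
    μ {x | ∀ i : Fin (m + 1), x (k + 1 + ((i : ℕ) : ℤ)) = w i}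
      = ENNReal.ofReal (π (k + 1) (w 0) *
          ∏ i : Fin m, P (k + 1 + ((i : ℕ) : ℤ)) (w i.castSucc) (w i.succ))

/-- The left shift is nonsingular with respect to `μ`:
`μ` and `μ ∘ T⁻¹` are mutually absolutely continuous. -/
def ShiftNonsingular {S : Type*} [Fintype S] [MeasurableSpace S]
    (μ : Measure (Seq S)) : Prop :=
  Measure.map (shiftMap (S := S)) μ ≪ μ ∧ μ ≪ Measure.map (shiftMap (S := S)) μ

/-- The left shift is conservative with respect to `μ`. -/
def ShiftConservative {S : Type*} [Fintype S] [MeasurableSpace S]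
    (μ : Measure (Seq S)) : Prop :=
  ∀ E : Set (Seq S), MeasurableSet E → 0 < μ E →
    ∃ n : ℕ, 1 ≤ n ∧ 0 < μ (E ∩ (shiftMap (S := S))^[n] ⁻¹' E)

/-- An element of the pseudo full-group `[[T]]` of the shift, together with
(a version of) the logarithm of its Radon–Nikodym derivative `log dμ∘V/dμ`. -/
structure PFG {S : Type*} [Fintype S] [MeasurableSpace S] (μ : Measure (Seq S)) where
  dom : Set (Seq S)
  toFun : Seq S → Seq S
  logDeriv : Seq S → ℝ
  meas_dom : MeasurableSet dom
  meas_toFun : Measurable toFun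
  meas_logDeriv : Measurable logDeriv
  injOn : Set.InjOn toFun dom
  orbit : ∀ᵐ x ∂μ.restrict dom, ∃ n : ℤ, toFun x = shiftZ n x
  deriv_spec : ∀ E : Set (Seq S), E ⊆ dom → MeasurableSet E →
    μ (toFun '' E) = ∫⁻ x in E, ENNReal.ofReal (Real.exp (logDeriv x)) ∂μ

/-- `r` is an essential value of (the Radon–Nikodym cocycle of) the shift on `(X, μ)`. -/
def IsEssentialValue {S : Type*} [Fintype S] [MeasurableSpace S]
    (μ : Measure (Seq S)) (r : ℝ) : Prop :=
  ∀ E : Set (Seq S), MeasurableSet E → 0 < μ E → ∀ ε : ℝ, 0 < ε →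
    ∃ g : PFG μ,
      0 < μ (E ∩ g.dom ∩ g.toFun ⁻¹' E ∩ {x | |g.logDeriv x - r| < ε})

end MarkovSFT
namespace MarkovSFT

/-- The weight `P_i(B) = P_i(b_1,b_2) ⋯ P_{i+ℓ-2}(b_{ℓ-1},b_ℓ)` of the block `B`
(of length `ℓ`, indexed from `0`) placed at coordinate `i`. -/
noncomputable def wordP {S : Type*} (P : ℤ → S → S → ℝ) (i : ℤ)
    (B : ℕ → S) (ℓ : ℕ) : ℝ :=
  ∏ l ∈ Finset.range (ℓ - 1), P (i + (l : ℤ)) (B l) (B (l + 1))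

/-- An element of the renormalization pseudo full-group `[[𝓡_A]]`: a nonsingular
measurable injection `V : dom → X_A`, moving a.e. point within its
finite-coordinate-change class, with log Radon–Nikodym derivative `logDeriv`,
such that a.e. on `dom` the ratio `(d(μ∘Tⁿ∘V)/dμ)(x) / (d(μ∘Tⁿ)/dμ)(x)`
(computed via the chain rule) tends to `1` as `|n| → ∞`. -/
structure RenormPFG {S : Type*} [Fintype S] [MeasurableSpace S]
    (μ : Measure (Seq S)) where
  dom : Set (Seq S)
  toFun : Seq S → Seq S
  logDeriv : Seq S → ℝ
  meas_dom : MeasurableSet dom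
  meas_toFun : Measurable toFun
  meas_logDeriv : Measurable logDeriv
  injOn : Set.InjOn toFun dom
  finite_diff : ∀ᵐ x ∂μ.restrict dom, {k : ℤ | toFun x k ≠ x k}.Finite
  deriv_spec : ∀ E : Set (Seq S), E ⊆ dom → MeasurableSet E →
    μ (toFun '' E) = ∫⁻ x in E, ENNReal.ofReal (Real.exp (logDeriv x)) ∂μ
  renorm : ∀ᵐ x ∂μ.restrict dom,
    Tendsto (fun n : ℤ =>
        Measure.rnDeriv (Measure.map (shiftZ (-n)) μ) μ (toFun x)
            * ENNReal.ofReal (Real.exp (logDeriv x))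
          / Measure.rnDeriv (Measure.map (shiftZ (-n)) μ) μ x)
      cofinite (𝓝 (1 : ENNReal))

/-- `r` is an essential value of the Radon–Nikodym cocycle of the
renormalization pseudo full-group `𝓡_A`. -/
def IsEssentialValueRenorm {S : Type*} [Fintype S] [MeasurableSpace S]
    (μ : Measure (Seq S)) (r : ℝ) : Prop :=
  ∀ E : Set (Seq S), MeasurableSet E → 0 < μ E → ∀ ε : ℝ, 0 < ε →
    ∃ g : RenormPFG μ,
      0 < μ (E ∩ g.dom ∩ g.toFun ⁻¹' E ∩ {x | |g.logDeriv x - r| < ε})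

end MarkovSFT
set_option linter.unusedSectionVars false

namespace MarkovSFT

/-! ### Cylinders and finite-coordinate functions -/

/-- The cylinder of sequences agreeing with `w` on the integer interval `[a, b]`. -/
def cyl {S : Type*} (a b : ℤ) (w : Seq S) : Set (Seq S) := {x | ∀ k, a ≤ k → k ≤ b → x k = w k}

/-- `G` depends only on the coordinates in `[a, b]`. A set is treated through its membership
predicate. -/
def DepOn {S β : Type*} (a b : ℤ) (G : Seq S → β) : Prop :=
  ∀ x y : Seq S, (∀ k, a ≤ k → k ≤ b → x k = y k) → G x = G y

/-- Restriction of a sequence to the coordinates in `[a, b]`. -/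
def restr {S : Type*} (a b : ℤ) (x : Seq S) : Finset.Icc a b → S := fun k => x k

/-- Extension of a word on `[a, b]` to a sequence, with an arbitrary fixed symbol elsewhere. -/
noncomputable def extend {S : Type*} [Nonempty S] (a b : ℤ) (v : Finset.Icc a b → S) : Seq S :=
  fun k => if h : k ∈ Finset.Icc a b then v ⟨k, h⟩ else Classical.arbitrary S

lemma extend_restr {S : Type*} [Nonempty S] (a b : ℤ) (x : Seq S) (k : ℤ) (ha : a ≤ k)
    (hb : k ≤ b) : extend a b (restr a b x) k = x k := by
  simp [extend, restr, ha, hb]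

lemma restr_extend {S : Type*} [Nonempty S] (a b : ℤ) (v : Finset.Icc a b → S) :
    restr a b (extend a b v) = v := by
  funext k
  have := k.2
  simp only [extend, restr]
  rw [dif_pos this]

lemma DepOn.mono {S β : Type*} {a b a' b' : ℤ} {G : Seq S → β} (h : DepOn a b G) (ha : a' ≤ a)
    (hb : b ≤ b') : DepOn a' b' G :=
  fun x y hxy => h x y fun k h1 h2 => hxy k (ha.trans h1) (h2.trans hb)

lemma DepOn.eq_comp {S β : Type*} [Nonempty S] {a b : ℤ} {G : Seq S → β} (h : DepOn a b G) :
    G = (fun v => G (extend a b v)) ∘ restr a b := by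
  funext x
  exact h _ _ fun k ha hb => (extend_restr a b x k ha hb).symm

section meas
variable {S : Type*} [Fintype S] [MeasurableSpace S] [MeasurableSingletonClass S]

lemma measurable_restr (a b : ℤ) : Measurable (restr (S := S) a b) :=
  measurable_pi_lambda _ fun k => measurable_pi_apply (k : ℤ)

lemma DepOn.measurable {β : Type*} [MeasurableSpace β] [Nonempty S] {a b : ℤ} {G : Seq S → β}
    (h : DepOn a b G) : Measurable G := by
  rw [h.eq_comp]
  exact (measurable_of_finite _).comp (measurable_restr a b)

lemma DepOn.measurableSet [Nonempty S] {a b : ℤ} {U : Set (Seq S)} (h : DepOn a b (· ∈ U)) :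
    MeasurableSet U :=
  measurableSet_setOfPred.2 h.measurable

lemma depOn_cyl (a b : ℤ) (w : Seq S) : DepOn a b (· ∈ cyl a b w) := by
  intro x y hxy
  simp only [cyl, Set.mem_ofPred_eq, eq_iff_iff]
  exact ⟨fun h k h1 h2 => (hxy k h1 h2) ▸ h k h1 h2, fun h k h1 h2 => (hxy k h1 h2) ▸ h k h1 h2⟩

lemma measurableSet_cyl [Nonempty S] (a b : ℤ) (w : Seq S) : MeasurableSet (cyl a b w) :=
  (depOn_cyl a b w).measurableSet

lemma restr_preimage_singleton [Nonempty S] (a b : ℤ) (v : Finset.Icc a b → S) :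
    restr a b ⁻¹' {v} = cyl a b (extend a b v) := by
  ext x
  simp only [Set.mem_preimage, Set.mem_singleton_iff, cyl, Set.mem_ofPred_eq]
  constructor
  · rintro rfl k h1 h2
    exact (extend_restr a b x k h1 h2).symm
  · intro h
    rw [← restr_extend a b v]
    funext k
    have := Finset.mem_Icc.1 k.2
    exact h k this.1 this.2

/-- Inequality of measures on all words over `[a, b]` passes to the restricted measures. -/
lemma map_restr_le [Nonempty S] {a b : ℤ} {ν₁ ν₂ : Measure (Seq S)}
    (h : ∀ w, ν₁ (cyl a b w) ≤ ν₂ (cyl a b w)) :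
    ν₁.map (restr a b) ≤ ν₂.map (restr a b) := by
  classical
  refine Measure.le_iff.2 fun s hs => ?_
  rw [Measure.map_apply (measurable_restr a b) hs, Measure.map_apply (measurable_restr a b) hs]
  have hfin : s.Finite := s.toFinite
  have key : ∀ ν : Measure (Seq S), ν (restr a b ⁻¹' s)
      = ∑ v ∈ hfin.toFinset, ν (restr a b ⁻¹' {v}) := by
    intro ν
    rw [sum_measure_preimage_singleton _ fun y _ =>
      measurable_restr a b (measurableSet_singleton y), hfin.coe_toFinset]
  rw [key, key]
  refine Finset.sum_le_sum fun v _ => ?_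
  rw [restr_preimage_singleton]
  exact h _

lemma lintegral_le_of_cyl [Nonempty S] {a b : ℤ} {ν₁ ν₂ : Measure (Seq S)}
    (h : ∀ w, ν₁ (cyl a b w) ≤ ν₂ (cyl a b w)) {G : Seq S → ENNReal} (hG : DepOn a b G) :
    ∫⁻ x, G x ∂ν₁ ≤ ∫⁻ x, G x ∂ν₂ := by
  have key : ∀ ν : Measure (Seq S), ∫⁻ x, G x ∂ν
      = ∫⁻ v, G (extend a b v) ∂(ν.map (restr a b)) := by
    intro ν
    rw [lintegral_map (measurable_of_finite _) (measurable_restr a b)]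
    exact lintegral_congr fun x => congrFun hG.eq_comp x
  rw [key, key]
  exact lintegral_mono' (map_restr_le h) le_rfl

lemma measure_le_of_cyl [Nonempty S] {a b : ℤ} {ν₁ ν₂ : Measure (Seq S)}
    (h : ∀ w, ν₁ (cyl a b w) ≤ ν₂ (cyl a b w)) {U : Set (Seq S)} (hU : DepOn a b (· ∈ U)) :
    ν₁ U ≤ ν₂ U := by
  have := lintegral_le_of_cyl h (G := U.indicator 1) (by
    intro x y hxy
    have := hU x y hxy
    by_cases hx : x ∈ U <;> simp_all)
  rwa [lintegral_indicator_one hU.measurableSet, lintegral_indicator_one hU.measurableSet] at this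

lemma exists_depOn_of_mem_measurableCylinders {U : Set (Seq S)}
    (hU : U ∈ measurableCylinders (fun _ : ℤ => S)) :
    ∃ n₀ : ℕ, DepOn (-(n₀ : ℤ)) n₀ (· ∈ U) := by
  obtain ⟨s, V, -, rfl⟩ := (mem_measurableCylinders U).1 hU
  refine ⟨s.sup Int.natAbs, fun x y hxy => ?_⟩
  have : s.restrict x = s.restrict y := by
    funext k
    have hk : Int.natAbs k ≤ s.sup Int.natAbs := Finset.le_sup (f := Int.natAbs) k.2
    exact hxy k (by omega) (by omega)
  simp only [mem_cylinder]
  rw [this]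

/-- A finite measure on sequences is determined by its values on all large centred cylinders. -/
lemma ext_of_cyl [Nonempty S] {ν₁ ν₂ : Measure (Seq S)} [IsFiniteMeasure ν₁] (n₀ : ℕ)
    (h : ∀ n : ℕ, n₀ ≤ n → ∀ w, ν₁ (cyl (-(n : ℤ)) n w) = ν₂ (cyl (-(n : ℤ)) n w)) :
    ν₁ = ν₂ := by
  have key : ∀ U ∈ measurableCylinders (fun _ : ℤ => S), ν₁ U = ν₂ U := by
    intro U hU
    obtain ⟨n₁, hn₁⟩ := exists_depOn_of_mem_measurableCylinders hU
    have hd : DepOn (-((max n₀ n₁ : ℕ) : ℤ)) (max n₀ n₁ : ℕ) (· ∈ U) :=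
      hn₁.mono (by omega) (by omega)
    exact le_antisymm
      (measure_le_of_cyl (fun w => (h _ (le_max_left _ _) w).le) hd)
      (measure_le_of_cyl (fun w => (h _ (le_max_left _ _) w).ge) hd)
  exact ext_of_generate_finite _ generateFrom_measurableCylinders.symm
    isPiSystem_measurableCylinders key (key _ (univ_mem_measurableCylinders _))

/-! ### Markov measures through their cylinder weights -/

/-- The Markov weight of the word `w` on `[a, b]`. -/
noncomputable def wt (Q : ℤ → S → S → ℝ) (p : ℤ → S → ℝ) (a b : ℤ) (w : Seq S) : ℝ :=
  p a (w a) * ∏ k ∈ Finset.Ico a b, Q k (w k) (w (k + 1))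

/-- The form in which the Markov property and the Doeblin condition are used: `ν` is a probability
measure, words on integer intervals have Markov weights, and the transition probabilities along
`A` are at least `δ`. -/
structure Mk (ν : Measure (Seq S)) (A : S → S → Bool) (δ : ℝ) (Q : ℤ → S → S → ℝ)
    (p : ℤ → S → ℝ) : Prop where
  prob : IsProbabilityMeasure ν
  δpos : 0 < δ
  δle : δ ≤ 1
  Qpos : ∀ n s t, A s t = true → δ ≤ Q n s t
  Qnn : ∀ n s t, 0 ≤ Q n s t
  pnn : ∀ n s, 0 ≤ p n s
  cylEq : ∀ a b, a ≤ b → ∀ w, ν (cyl a b w) = ENNReal.ofReal (wt Q p a b w)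

lemma IsMarkovMeasure.mk' {μ : Measure (Seq S)} {A : S → S → Bool} {P : ℤ → S → S → ℝ}
    {π : ℤ → S → ℝ} (hμ : IsMarkovMeasure μ A P π) (hD : Doeblin A P) :
    ∃ δ, Mk μ A δ P π := by
  obtain ⟨δ, hδ, h⟩ := hD
  refine ⟨min δ 1, hμ.isProb, by positivity, min_le_right _ _,
    fun n s t hA => (min_le_left _ _).trans ((h n s t).2 hA), fun n => (hμ.stochastic n).1,
    hμ.dist_nonneg, fun a b hab w => ?_⟩
  obtain ⟨m, rfl⟩ : ∃ m : ℕ, b = a + m := ⟨(b - a).toNat, by omega⟩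
  have := hμ.cylinder (a - 1) m (fun i => w (a + (i : ℕ)))
  simp only [sub_add_cancel] at this
  have hs : cyl a (a + m) w = {x | ∀ i : Fin (m + 1), x (a + ((i : ℕ) : ℤ)) = w (a + (i : ℕ))} := by
    ext x
    simp only [cyl, Set.mem_ofPred_eq]
    constructor
    · intro hx i
      exact hx _ (by omega) (by have := i.2; omega)
    · intro hx k h1 h2
      have := hx ⟨(k - a).toNat, by omega⟩
      have e : a + ((k - a).toNat : ℤ) = k := by omega
      simpa only [e] using this
  rw [hs, this]
  congr 1
  simp only [wt, Fin.val_zero, Nat.cast_zero, add_zero, Fin.val_castSucc, Fin.val_succ]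
  congr 1
  rw [Finset.prod_fin_eq_prod_range, Finset.prod_congr rfl (g := fun i : ℕ =>
    P (a + i) (w (a + i)) (w (a + i + 1)))]
  · symm
    refine Finset.prod_nbij' (fun k => (k - a).toNat) (fun i => a + (i : ℤ)) ?_ ?_ ?_ ?_ ?_
    · intro k hk; simp at hk ⊢; omega
    · intro k hk; simp at hk ⊢; omega
    · intro k hk; simp at hk ⊢; omega
    · intro k hk; simp at hk ⊢
    · intro k hk
      simp at hk
      have e : a + ((k - a).toNat : ℤ) = k := by omega
      simp only [e]
  · intro i hi
    simp only [Finset.mem_range] at hi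
    simp [hi, add_assoc]

lemma wt_nonneg {Q : ℤ → S → S → ℝ} {p : ℤ → S → ℝ} (hQ : ∀ n s t, 0 ≤ Q n s t)
    (hp : ∀ n s, 0 ≤ p n s) (a b : ℤ) (w : Seq S) : 0 ≤ wt Q p a b w :=
  mul_nonneg (hp _ _) (Finset.prod_nonneg fun _ _ => hQ _ _ _)

lemma Mk.cylReal {ν : Measure (Seq S)} {A : S → S → Bool} {δ : ℝ} {Q : ℤ → S → S → ℝ}
    {p : ℤ → S → ℝ} (h : Mk ν A δ Q p) {a b : ℤ} (hab : a ≤ b) (w : Seq S) :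
    ν.real (cyl a b w) = wt Q p a b w := by
  rw [measureReal_def, h.cylEq a b hab, ENNReal.toReal_ofReal (wt_nonneg h.Qnn h.pnn _ _ _)]

lemma measurable_shiftZ (n : ℤ) : Measurable (shiftZ (S := S) n) :=
  measurable_pi_lambda _ fun k => measurable_pi_apply (k + n)

/-- A shifted Markov measure is Markov, with shifted transition matrices. -/
lemma Mk.shift [Nonempty S] {ν : Measure (Seq S)} {A : S → S → Bool} {δ : ℝ} {Q : ℤ → S → S → ℝ}
    {p : ℤ → S → ℝ} (h : Mk ν A δ Q p) (n : ℤ) :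
    Mk (ν.map (shiftZ n)) A δ (fun k => Q (k + n)) (fun k => p (k + n)) := by
  have := h.prob
  refine ⟨Measure.isProbabilityMeasure_map (measurable_shiftZ n).aemeasurable, h.δpos, h.δle,
    fun k => h.Qpos _, fun k => h.Qnn _, fun k => h.pnn _, fun a b hab w => ?_⟩
  rw [Measure.map_apply (measurable_shiftZ n) (measurableSet_cyl a b w)]
  have hs : shiftZ n ⁻¹' cyl a b w = cyl (a + n) (b + n) (shiftZ (-n) w) := by
    ext x
    simp only [cyl, shiftZ, Set.mem_preimage, Set.mem_ofPred_eq]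
    constructor
    · intro hx k h1 h2
      have := hx (k + -n) (by omega) (by omega)
      simpa using this
    · intro hx k h1 h2
      have := hx (k + n) (by omega) (by omega)
      simpa using this
  rw [hs, h.cylEq _ _ (by omega)]
  congr 1
  simp only [wt, shiftZ]
  congr 1
  · simp
  rw [← Finset.prod_Ico_add']
  refine Finset.prod_congr rfl fun k _ => ?_
  congr 2 <;> ring

end meas

/-! ### Exchanging two blocks -/

/-- One term of an admissible configuration: two different words `B`, `B'` of the same length with
the same end symbols, and two disjoint places `i`, `j` for them. -/
structure Site (S : Type*) where
  i : ℤ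
  j : ℤ
  len : ℕ
  B : ℕ → S
  B' : ℕ → S
  len_pos : 1 ≤ len
  first : B 0 = B' 0
  last : B (len - 1) = B' (len - 1)
  ne : ∃ l < len, B l ≠ B' l
  disj : i + len ≤ j

namespace Site
variable {S : Type*} (σ : Site S)

/-- The site with the roles of the two words exchanged. -/
def swap : Site S where
  i := σ.i
  j := σ.j
  len := σ.len
  B := σ.B'
  B' := σ.B
  len_pos := σ.len_pos
  first := σ.first.symm
  last := σ.last.symm
  ne := by obtain ⟨l, hl, h⟩ := σ.ne; exact ⟨l, hl, h.symm⟩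
  disj := σ.disj

/-- The sequences with `B` at `i` and `B'` at `j`. -/
def plus : Set (Seq S) := {x | ∀ l : ℕ, l < σ.len → x (σ.i + l) = σ.B l ∧ x (σ.j + l) = σ.B' l}

lemma swap_swap : σ.swap.swap = σ := rfl

/-- The sequences with `B'` at `i` and `B` at `j`. -/
def minus : Set (Seq S) := σ.swap.plus

/-- The coordinates occupied by the two places of the site. -/
def Touches (k : ℤ) : Prop := (σ.i ≤ k ∧ k < σ.i + σ.len) ∨ (σ.j ≤ k ∧ k < σ.j + σ.len)

open Classical in
/-- Overwrite the places of the site by `B'` at `i` and `B` at `j`. -/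
noncomputable def write (x : Seq S) : Seq S := fun k =>
  if σ.i ≤ k ∧ k < σ.i + σ.len then σ.B' (k - σ.i).toNat
  else if σ.j ≤ k ∧ k < σ.j + σ.len then σ.B (k - σ.j).toNat else x k

open Classical in
/-- Exchange the two words of the site if they are present, in either order. -/
noncomputable def flip (x : Seq S) : Seq S :=
  if x ∈ σ.plus then σ.write x else if x ∈ σ.minus then σ.swap.write x else x

open Classical in
/-- The state of the site: `1` on `plus`, `-1` on `minus`, and `0` elsewhere. -/
noncomputable def sgn (x : Seq S) : ℝ :=
  if x ∈ σ.plus then 1 else if x ∈ σ.minus then -1 else 0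

lemma not_minus {x : Seq S} (h : x ∈ σ.plus) : x ∉ σ.minus := by
  obtain ⟨l, hl, hne⟩ := σ.ne
  intro h'
  exact hne ((h l hl).1.symm.trans (h' l hl).1)

lemma not_plus {x : Seq S} (h : x ∈ σ.minus) : x ∉ σ.plus := σ.swap.not_minus h

lemma flip_plus {x : Seq S} (h : x ∈ σ.plus) : σ.flip x = σ.write x := by simp [flip, h]

lemma flip_minus {x : Seq S} (h : x ∈ σ.minus) : σ.flip x = σ.swap.write x := by
  simp [flip, h, σ.not_plus h]

lemma flip_neither {x : Seq S} (h : x ∉ σ.plus) (h' : x ∉ σ.minus) : σ.flip x = x := by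
  simp [flip, h, h']

lemma sgn_plus {x : Seq S} (h : x ∈ σ.plus) : σ.sgn x = 1 := by simp [sgn, h]

lemma sgn_minus {x : Seq S} (h : x ∈ σ.minus) : σ.sgn x = -1 := by
  simp [sgn, h, σ.not_plus h]

lemma sgn_neither {x : Seq S} (h : x ∉ σ.plus) (h' : x ∉ σ.minus) : σ.sgn x = 0 := by
  simp [sgn, h, h']

lemma flip_swap : σ.swap.flip = σ.flip := by
  funext x
  by_cases h : x ∈ σ.plus
  · rw [σ.flip_plus h, σ.swap.flip_minus (by exact h), swap_swap]
  · by_cases h' : x ∈ σ.minus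
    · rw [σ.flip_minus h', σ.swap.flip_plus h']
    · rw [σ.flip_neither h h', σ.swap.flip_neither h' h]

lemma write_mem (x : Seq S) : σ.write x ∈ σ.minus := by
  intro l hl
  have hd := σ.disj
  change l < σ.len at hl
  change σ.write x (σ.i + l) = σ.B' l ∧ σ.write x (σ.j + l) = σ.B l
  constructor
  · have : σ.i ≤ σ.i + l ∧ σ.i + l < σ.i + σ.len := by omega
    simp [write, this]
  · have h1 : ¬ (σ.i ≤ σ.j + l ∧ σ.j + l < σ.i + σ.len) := by omega
    have h2 : σ.j ≤ σ.j + l ∧ σ.j + l < σ.j + σ.len := by omega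
    simp only [write, if_neg h1, if_pos h2]
    congr 1; omega

lemma write_off (x : Seq S) {k : ℤ} (hk : ¬ σ.Touches k) : σ.write x k = x k := by
  simp only [Touches, not_or] at hk
  simp only [write, if_neg hk.1, if_neg hk.2]

lemma flip_off (x : Seq S) {k : ℤ} (hk : ¬ σ.Touches k) : σ.flip x k = x k := by
  by_cases h : x ∈ σ.plus
  · rw [σ.flip_plus h, σ.write_off x hk]
  · by_cases h' : x ∈ σ.minus
    · rw [σ.flip_minus h', σ.swap.write_off x hk]
    · rw [σ.flip_neither h h']

lemma plus_congr {x y : Seq S} (h : ∀ k, σ.Touches k → x k = y k) : x ∈ σ.plus ↔ y ∈ σ.plus := by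
  have h1 : ∀ l : ℕ, l < σ.len → x (σ.i + l) = y (σ.i + l) :=
    fun l hl => h _ (Or.inl (by omega))
  have h2 : ∀ l : ℕ, l < σ.len → x (σ.j + l) = y (σ.j + l) :=
    fun l hl => h _ (Or.inr (by omega))
  constructor
  · intro hx l hl
    rw [← h1 l hl, ← h2 l hl]; exact hx l hl
  · intro hx l hl
    rw [h1 l hl, h2 l hl]; exact hx l hl

lemma minus_congr {x y : Seq S} (h : ∀ k, σ.Touches k → x k = y k) :
    x ∈ σ.minus ↔ y ∈ σ.minus := σ.swap.plus_congr h

lemma sgn_congr {x y : Seq S} (h : ∀ k, σ.Touches k → x k = y k) : σ.sgn x = σ.sgn y := by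
  by_cases h1 : x ∈ σ.plus
  · rw [σ.sgn_plus h1, σ.sgn_plus ((σ.plus_congr h).1 h1)]
  · have h1' := (σ.plus_congr h).not.1 h1
    by_cases h2 : x ∈ σ.minus
    · rw [σ.sgn_minus h2, σ.sgn_minus ((σ.minus_congr h).1 h2)]
    · rw [σ.sgn_neither h1 h2, σ.sgn_neither h1' ((σ.minus_congr h).not.1 h2)]

lemma flip_congr {x y : Seq S} (h : ∀ k, σ.Touches k → x k = y k) {k : ℤ} (hk : x k = y k) :
    σ.flip x k = σ.flip y k := by
  by_cases h1 : x ∈ σ.plus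
  · rw [σ.flip_plus h1, σ.flip_plus ((σ.plus_congr h).1 h1)]
    simp only [write, hk]
  · have h1' := (σ.plus_congr h).not.1 h1
    by_cases h2 : x ∈ σ.minus
    · rw [σ.flip_minus h2, σ.flip_minus ((σ.minus_congr h).1 h2)]
      simp only [write, hk]
    · rw [σ.flip_neither h1 h2, σ.flip_neither h1' ((σ.minus_congr h).not.1 h2), hk]

/-- If `B` is at `i` and `B'` at `j`, rewriting them there changes nothing. -/
lemma swap_write_of_plus {x y : Seq S} (h : x ∈ σ.plus)
    (hxy : ∀ k, ¬ σ.Touches k → y k = x k) : σ.swap.write y = x := by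
  funext k
  by_cases hk : σ.Touches k
  · have hi := σ.write_mem
    have h1 : σ.swap.write y ∈ σ.plus := σ.swap.write_mem y
    rcases hk with hk | hk
    · have e : σ.i + ((k - σ.i).toNat : ℤ) = k := by omega
      have a1 := (h1 (k - σ.i).toNat (by omega)).1
      have a2 := (h (k - σ.i).toNat (by omega)).1
      rw [e] at a1 a2; rw [a1, a2]
    · have e : σ.j + ((k - σ.j).toNat : ℤ) = k := by omega
      have a1 := (h1 (k - σ.j).toNat (by omega)).2
      have a2 := (h (k - σ.j).toNat (by omega)).2
      rw [e] at a1 a2; rw [a1, a2]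
  · rw [σ.swap.write_off y hk, hxy k hk]

lemma flip_mem_minus {x : Seq S} (h : x ∈ σ.plus) : σ.flip x ∈ σ.minus := by
  rw [σ.flip_plus h]; exact σ.write_mem x

lemma flip_mem_plus {x : Seq S} (h : x ∈ σ.minus) : σ.flip x ∈ σ.plus := by
  rw [σ.flip_minus h]; exact σ.swap.write_mem x

lemma flip_flip (x : Seq S) : σ.flip (σ.flip x) = x := by
  by_cases h : x ∈ σ.plus
  · rw [σ.flip_minus (σ.flip_mem_minus h)]
    exact σ.swap_write_of_plus h fun k hk => σ.flip_off x hk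
  · by_cases h' : x ∈ σ.minus
    · rw [σ.flip_plus (σ.flip_mem_plus h')]
      exact σ.swap.swap_write_of_plus h' fun k hk => σ.flip_off x hk
    · rw [σ.flip_neither h h', σ.flip_neither h h']

lemma sgn_flip (x : Seq S) : σ.sgn (σ.flip x) = - σ.sgn x := by
  by_cases h : x ∈ σ.plus
  · rw [σ.sgn_minus (σ.flip_mem_minus h), σ.sgn_plus h]
  · by_cases h' : x ∈ σ.minus
    · rw [σ.sgn_plus (σ.flip_mem_plus h'), σ.sgn_minus h', neg_neg]
    · rw [σ.flip_neither h h', σ.sgn_neither h h', neg_zero]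

/-- Since the two words share their end symbols, the end coordinates of both places are fixed. -/
lemma flip_outer (x : Seq S) {k : ℤ} (hk : k ≤ σ.i ∨ (σ.i + σ.len - 1 ≤ k ∧ k ≤ σ.j) ∨
    σ.j + σ.len - 1 ≤ k) : σ.flip x k = x k := by
  by_cases ht : σ.Touches k
  · have hl := σ.len_pos
    have hd := σ.disj
    have key : ∀ τ : Site S, τ.i = σ.i → τ.j = σ.j → τ.len = σ.len → x ∈ τ.plus →
        τ.write x k = x k := by
      intro τ ei ej el hx
      have hm := τ.write_mem x
      have h0 := hx 0 (by omega)
      have h1 := hx (τ.len - 1) (by omega)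
      have m0 := hm 0 (by change 0 < τ.len; omega)
      have m1 := hm (τ.len - 1) (by change _ < τ.len; omega)
      change τ.write x (τ.i + (0 : ℕ)) = τ.B' 0 ∧ τ.write x (τ.j + (0 : ℕ)) = τ.B 0 at m0
      change τ.write x (τ.i + (τ.len - 1 : ℕ)) = τ.B' _ ∧
        τ.write x (τ.j + (τ.len - 1 : ℕ)) = τ.B _ at m1
      have f := τ.first
      have g := τ.last
      rcases ht with ht | ht
      · by_cases hki : k = τ.i + (0 : ℕ)
        · rw [hki, m0.1, h0.1, f]
        · have hki : k = τ.i + (τ.len - 1 : ℕ) := by omega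
          rw [hki, m1.1, h1.1, g]
      · by_cases hki : k = τ.j + (0 : ℕ)
        · rw [hki, m0.2, h0.2, f]
        · have hki : k = τ.j + (τ.len - 1 : ℕ) := by omega
          rw [hki, m1.2, h1.2, g]
    by_cases h : x ∈ σ.plus
    · rw [σ.flip_plus h]; exact key σ rfl rfl rfl h
    · by_cases h' : x ∈ σ.minus
      · rw [σ.flip_minus h']; exact key σ.swap rfl rfl rfl h'
      · rw [σ.flip_neither h h']
  · exact σ.flip_off x ht

end Site

section meas
variable {S : Type*} [Fintype S] [MeasurableSpace S] [MeasurableSingletonClass S]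

lemma prod_eq_wordP (Q : ℤ → S → S → ℝ) (i : ℤ) (U : ℕ → S) (n : ℕ) (hn : 1 ≤ n) (x : Seq S)
    (hx : ∀ l : ℕ, l < n → x (i + l) = U l) :
    ∏ k ∈ Finset.Ico i (i + n - 1), Q k (x k) (x (k + 1)) = wordP Q i U n := by
  refine Finset.prod_nbij' (fun k => (k - i).toNat) (fun l => i + (l : ℤ)) ?_ ?_ ?_ ?_ ?_
  · intro k hk; simp at hk ⊢; omega
  · intro k hk; simp at hk ⊢; omega
  · intro k hk; simp at hk ⊢; omega
  · intro k hk; simp at hk ⊢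
  · intro k hk
    simp at hk
    have e : i + ((k - i).toNat : ℤ) = k := by omega
    have h1 := hx (k - i).toNat (by omega)
    have h2 := hx ((k - i).toNat + 1) (by omega)
    rw [e] at h1
    push_cast at h2
    rw [← add_assoc, e] at h2
    rw [e, ← h1, ← h2]

lemma prod_Ico_split (f : ℤ → ℝ) {a b c : ℤ} (hab : a ≤ b) (hbc : b ≤ c) :
    (∏ k ∈ Finset.Ico a b, f k) * ∏ k ∈ Finset.Ico b c, f k = ∏ k ∈ Finset.Ico a c, f k := by
  rw [← Finset.Ico_union_Ico_eq_Ico hab hbc,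
    Finset.prod_union (Finset.Ico_disjoint_Ico_consecutive a b c)]

lemma Site.wt_split (σ : Site S) (Q : ℤ → S → S → ℝ) (p : ℤ → S → ℝ) {a b : ℤ} (ha : a ≤ σ.i)
    (hb : σ.j + σ.len ≤ b + 1) {x : Seq S} (hx : x ∈ σ.plus) :
    wt Q p a b x = p a (x a) * ((∏ k ∈ Finset.Ico a σ.i, Q k (x k) (x (k + 1)))
      * wordP Q σ.i σ.B σ.len
      * (∏ k ∈ Finset.Ico (σ.i + σ.len - 1) σ.j, Q k (x k) (x (k + 1)))
      * wordP Q σ.j σ.B' σ.len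
      * ∏ k ∈ Finset.Ico (σ.j + σ.len - 1) b, Q k (x k) (x (k + 1))) := by
  have hl := σ.len_pos
  have hd := σ.disj
  rw [wt, ← prod_eq_wordP Q σ.i σ.B σ.len hl x (fun l h => (hx l h).1),
    ← prod_eq_wordP Q σ.j σ.B' σ.len hl x (fun l h => (hx l h).2),
    prod_Ico_split _ (by omega) (by omega),
    prod_Ico_split _ (by omega) (by omega),
    prod_Ico_split _ (by omega) (by omega),
    prod_Ico_split _ (by omega) (by omega)]

lemma Site.wt_flip (σ : Site S) (Q : ℤ → S → S → ℝ) (p : ℤ → S → ℝ) {a b : ℤ} (ha : a ≤ σ.i)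
    (hb : σ.j + σ.len ≤ b + 1) {x : Seq S} (hx : x ∈ σ.plus) :
    wt Q p a b (σ.flip x) * (wordP Q σ.i σ.B σ.len * wordP Q σ.j σ.B' σ.len)
      = wt Q p a b x * (wordP Q σ.i σ.B' σ.len * wordP Q σ.j σ.B σ.len) := by
  have hl := σ.len_pos
  have hd := σ.disj
  have hm : σ.flip x ∈ σ.swap.plus := σ.flip_mem_minus hx
  rw [σ.wt_split Q p ha hb hx, σ.swap.wt_split Q p ha hb hm]
  have e0 : σ.flip x a = x a := σ.flip_outer x (Or.inl ha)
  have e1 : ∏ k ∈ Finset.Ico a σ.i, Q k (σ.flip x k) (σ.flip x (k + 1))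
      = ∏ k ∈ Finset.Ico a σ.i, Q k (x k) (x (k + 1)) := by
    refine Finset.prod_congr rfl fun k hk => ?_
    rw [Finset.mem_Ico] at hk
    rw [σ.flip_outer x (Or.inl (by omega)), σ.flip_outer x (Or.inl (by omega))]
  have e2 : ∏ k ∈ Finset.Ico (σ.i + σ.len - 1) σ.j, Q k (σ.flip x k) (σ.flip x (k + 1))
      = ∏ k ∈ Finset.Ico (σ.i + σ.len - 1) σ.j, Q k (x k) (x (k + 1)) := by
    refine Finset.prod_congr rfl fun k hk => ?_
    rw [Finset.mem_Ico] at hk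
    rw [σ.flip_outer x (Or.inr (Or.inl (by omega))), σ.flip_outer x (Or.inr (Or.inl (by omega)))]
  have e3 : ∏ k ∈ Finset.Ico (σ.j + σ.len - 1) b, Q k (σ.flip x k) (σ.flip x (k + 1))
      = ∏ k ∈ Finset.Ico (σ.j + σ.len - 1) b, Q k (x k) (x (k + 1)) := by
    refine Finset.prod_congr rfl fun k hk => ?_
    rw [Finset.mem_Ico] at hk
    rw [σ.flip_outer x (Or.inr (Or.inr (by omega))), σ.flip_outer x (Or.inr (Or.inr (by omega)))]
  simp only [Site.swap] at *
  rw [e0, e1, e2, e3]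
  ring

/-- Both words of the site are `A`-admissible. -/
def Site.Adm (σ : Site S) (A : S → S → Bool) : Prop :=
  ∀ l : ℕ, l + 1 < σ.len → A (σ.B l) (σ.B (l + 1)) = true ∧ A (σ.B' l) (σ.B' (l + 1)) = true

lemma wordP_pos {A : S → S → Bool} {δ : ℝ} (hδ : 0 < δ) {Q : ℤ → S → S → ℝ}
    (hQ : ∀ n s t, A s t = true → δ ≤ Q n s t) (i : ℤ) (U : ℕ → S) (n : ℕ)
    (hU : ∀ l : ℕ, l + 1 < n → A (U l) (U (l + 1)) = true) : 0 < wordP Q i U n :=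
  Finset.prod_pos fun l hl => hδ.trans_le (hQ _ _ _ (hU l (by simp at hl; omega)))

/-- The logarithmic weight change when `plus` is turned into `minus`. -/
noncomputable def Site.D (σ : Site S) (Q : ℤ → S → S → ℝ) : ℝ :=
  Real.log (wordP Q σ.i σ.B' σ.len * wordP Q σ.j σ.B σ.len /
    (wordP Q σ.i σ.B σ.len * wordP Q σ.j σ.B' σ.len))

lemma Site.D_swap (σ : Site S) (Q : ℤ → S → S → ℝ) : σ.swap.D Q = - σ.D Q := by
  rw [Site.D, Site.D, ← Real.log_inv, inv_div]
  rfl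

lemma Site.wt_flip' (σ : Site S) {A : S → S → Bool} (hA : σ.Adm A) {δ : ℝ} (hδ : 0 < δ)
    {Q : ℤ → S → S → ℝ} (hQ : ∀ n s t, A s t = true → δ ≤ Q n s t) (p : ℤ → S → ℝ) {a b : ℤ}
    (ha : a ≤ σ.i) (hb : σ.j + σ.len ≤ b + 1) (x : Seq S) :
    wt Q p a b (σ.flip x) = Real.exp (σ.D Q * σ.sgn x) * wt Q p a b x := by
  have key : ∀ τ : Site S, τ.Adm A → a ≤ τ.i → τ.j + τ.len ≤ b + 1 → x ∈ τ.plus →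
      wt Q p a b (τ.flip x) = Real.exp (τ.D Q) * wt Q p a b x := by
    intro τ hτ h1 h2 hx
    have p1 := wordP_pos hδ hQ τ.i τ.B τ.len fun l hl => (hτ l hl).1
    have p2 := wordP_pos hδ hQ τ.i τ.B' τ.len fun l hl => (hτ l hl).2
    have p3 := wordP_pos hδ hQ τ.j τ.B τ.len fun l hl => (hτ l hl).1
    have p4 := wordP_pos hδ hQ τ.j τ.B' τ.len fun l hl => (hτ l hl).2
    rw [Site.D, Real.exp_log (by positivity)]
    have := τ.wt_flip Q p h1 h2 hx
    field_simp
    linarith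
  by_cases h : x ∈ σ.plus
  · rw [key σ hA ha hb h, σ.sgn_plus h, mul_one]
  · by_cases h' : x ∈ σ.minus
    · have := key σ.swap (fun l hl => (hA l hl).symm) ha hb h'
      rw [σ.flip_swap] at this
      rw [this, σ.D_swap, σ.sgn_minus h', mul_neg_one]
    · rw [σ.flip_neither h h', σ.sgn_neither h h']
      simp

lemma Site.depOn_plus (σ : Site S) : DepOn σ.i (σ.j + σ.len) (· ∈ σ.plus) := by
  intro x y hxy
  have hd := σ.disj
  exact propext (σ.plus_congr fun k hk => hxy k (by rcases hk with h | h <;> omega)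
    (by rcases hk with h | h <;> omega))

lemma Site.depOn_sgn (σ : Site S) : DepOn σ.i (σ.j + σ.len) σ.sgn := by
  intro x y hxy
  have hd := σ.disj
  exact σ.sgn_congr fun k hk => hxy k (by rcases hk with h | h <;> omega)
    (by rcases hk with h | h <;> omega)

lemma Site.measurable_flip [Nonempty S] (σ : Site S) : Measurable σ.flip := by
  have hd := σ.disj
  refine measurable_pi_lambda _ fun k => ?_
  have : DepOn (min k σ.i) (max k (σ.j + σ.len)) fun x => σ.flip x k := by
    intro x y hxy
    exact σ.flip_congr (fun k hk => hxy k (by rcases hk with h | h <;> omega)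
      (by rcases hk with h | h <;> omega)) (hxy k (by omega) (by omega))
  exact this.measurable

lemma Site.flip_preimage_cyl (σ : Site S) {a b : ℤ} (ha : a ≤ σ.i) (hb : σ.j + σ.len ≤ b)
    (w : Seq S) : σ.flip ⁻¹' cyl a b w = cyl a b (σ.flip w) := by
  have hd := σ.disj
  have key : ∀ x w : Seq S, x ∈ cyl a b w → σ.flip x ∈ cyl a b (σ.flip w) := by
    intro x w hx k h1 h2
    exact σ.flip_congr (fun k hk => hx k (by rcases hk with h | h <;> omega)
      (by rcases hk with h | h <;> omega)) (hx k h1 h2)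
  ext x
  constructor
  · intro hx
    have := key _ _ hx
    rwa [σ.flip_flip] at this
  · intro hx
    have := key _ _ hx
    rwa [σ.flip_flip] at this

/-- The Radon–Nikodym derivative of the exchange of two blocks. -/
lemma Site.map_flip [Nonempty S] (σ : Site S) {ν : Measure (Seq S)} {A : S → S → Bool} {δ : ℝ}
    {Q : ℤ → S → S → ℝ} {p : ℤ → S → ℝ} (h : Mk ν A δ Q p) (hA : σ.Adm A) :
    ν.map σ.flip = ν.withDensity fun x => ENNReal.ofReal (Real.exp (σ.D Q * σ.sgn x)) := by
  have := h.prob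
  have : IsProbabilityMeasure (ν.map σ.flip) :=
    Measure.isProbabilityMeasure_map σ.measurable_flip.aemeasurable
  refine ext_of_cyl (max σ.i.natAbs (σ.j + σ.len).natAbs) fun n hn w => ?_
  have ha : -(n : ℤ) ≤ σ.i := by omega
  have hb : σ.j + σ.len ≤ n := by omega
  rw [Measure.map_apply σ.measurable_flip (measurableSet_cyl _ _ w),
    withDensity_apply _ (measurableSet_cyl _ _ w), σ.flip_preimage_cyl ha hb,
    setLIntegral_congr_fun (g := fun _ => ENNReal.ofReal (Real.exp (σ.D Q * σ.sgn w)))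
      (measurableSet_cyl _ _ w), setLIntegral_const, h.cylEq _ _ (by omega),
    h.cylEq _ _ (by omega), ← ENNReal.ofReal_mul (Real.exp_nonneg _),
    σ.wt_flip' hA h.δpos h.Qpos p ha (by omega)]
  intro x hx
  have : σ.sgn x = σ.sgn w :=
    σ.depOn_sgn x w fun k h1 h2 => hx k (by omega) (by omega)
  simp only [this]

end meas

/-! ### Exchanging blocks at finitely many sites -/

section comb
variable {S : Type*}

/-- The places of distinct sites are disjoint. -/
def SepSites (σ : ℕ → Site S) : Prop :=
  ∀ m n, m ≠ n → ∀ k, (σ m).Touches k → ¬ (σ n).Touches k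

lemma Site.sgn_flip_of_disj {σ τ : Site S} (h : ∀ k, τ.Touches k → ¬ σ.Touches k) (x : Seq S) :
    τ.sgn (σ.flip x) = τ.sgn x :=
  τ.sgn_congr fun k hk => σ.flip_off x (h k hk)

lemma Site.flip_comm {σ τ : Site S} (h : ∀ k, τ.Touches k → ¬ σ.Touches k) (x : Seq S) :
    σ.flip (τ.flip x) = τ.flip (σ.flip x) := by
  have h' : ∀ k, σ.Touches k → ¬ τ.Touches k := fun k hk hk' => h k hk' hk
  funext k
  by_cases hk : σ.Touches k
  · rw [τ.flip_off _ (h' k hk)]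
    exact σ.flip_congr (fun k hk => τ.flip_off x (h' k hk)) (τ.flip_off x (h' k hk))
  · rw [σ.flip_off _ hk]
    exact τ.flip_congr (fun k hk => (σ.flip_off x (h k hk)).symm) (σ.flip_off x hk).symm

/-- The simultaneous exchange at the first `n` sites. -/
noncomputable def multiFlip (σ : ℕ → Site S) : ℕ → Seq S → Seq S
  | 0, x => x
  | n + 1, x => (σ n).flip (multiFlip σ n x)

variable {σ : ℕ → Site S}

lemma multiFlip_off (n : ℕ) (x : Seq S) {k : ℤ} (hk : ∀ m < n, ¬ (σ m).Touches k) :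
    multiFlip σ n x k = x k := by
  induction n with
  | zero => rfl
  | succ n ih =>
    rw [multiFlip, (σ n).flip_off _ (hk n (by omega)), ih fun m hm => hk m (by omega)]

lemma multiFlip_flip (hσ : SepSites σ) (n m : ℕ) (hnm : n ≤ m) (x : Seq S) :
    multiFlip σ n ((σ m).flip x) = (σ m).flip (multiFlip σ n x) := by
  induction n with
  | zero => rfl
  | succ n ih =>
    rw [multiFlip, ih (by omega), multiFlip, Site.flip_comm (hσ m n (by omega))]

lemma multiFlip_multiFlip (hσ : SepSites σ) (n : ℕ) (x : Seq S) :
    multiFlip σ n (multiFlip σ n x) = x := by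
  induction n with
  | zero => rfl
  | succ n ih =>
    rw [multiFlip, multiFlip, multiFlip_flip hσ n n le_rfl, ih, Site.flip_flip]

lemma sgn_multiFlip_of_le (hσ : SepSites σ) (n m : ℕ) (hnm : n ≤ m) (x : Seq S) :
    (σ m).sgn (multiFlip σ n x) = (σ m).sgn x := by
  induction n with
  | zero => rfl
  | succ n ih => rw [multiFlip, Site.sgn_flip_of_disj (hσ m n (by omega)), ih (by omega)]

lemma sgn_multiFlip_of_lt (hσ : SepSites σ) (n m : ℕ) (hnm : m < n) (x : Seq S) :
    (σ m).sgn (multiFlip σ n x) = - (σ m).sgn x := by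
  induction n with
  | zero => omega
  | succ n ih =>
    rw [multiFlip]
    by_cases h : m = n
    · subst h
      rw [Site.sgn_flip, sgn_multiFlip_of_le hσ m m le_rfl]
    · rw [Site.sgn_flip_of_disj (hσ m n h), ih (by omega)]

end comb

section meas
variable {S : Type*} [Fintype S] [MeasurableSpace S] [MeasurableSingletonClass S]

/-- The logarithm of the Radon–Nikodym derivative of `multiFlip σ n` for the Markov measure with
transition matrices `Q`. -/
noncomputable def logW (σ : ℕ → Site S) (Q : ℤ → S → S → ℝ) (n : ℕ) (x : Seq S) : ℝ :=
  ∑ k ∈ Finset.range n, (σ k).D Q * (σ k).sgn x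

lemma logW_multiFlip {σ : ℕ → Site S} (hσ : SepSites σ) (Q : ℤ → S → S → ℝ) {m n : ℕ}
    (hmn : m ≤ n) (x : Seq S) : logW σ Q m (multiFlip σ n x) = - logW σ Q m x := by
  rw [logW, logW, ← Finset.sum_neg_distrib]
  refine Finset.sum_congr rfl fun k hk => ?_
  rw [sgn_multiFlip_of_lt hσ n k (by simp at hk; omega)]
  ring

lemma measurable_multiFlip [Nonempty S] (σ : ℕ → Site S) (n : ℕ) :
    Measurable (multiFlip σ n) := by
  induction n with
  | zero => exact measurable_id
  | succ n ih => exact (σ n).measurable_flip.comp ih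

lemma measurable_logW [Nonempty S] (σ : ℕ → Site S) (Q : ℤ → S → S → ℝ) (n : ℕ) :
    Measurable (logW σ Q n) :=
  Finset.measurable_sum _ fun k _ => ((σ k).depOn_sgn.measurable).const_mul _

lemma map_withDensity_invol {X : Type*} [MeasurableSpace X] {μ : Measure X} {f : X → X}
    (hf : Measurable f) (hff : ∀ x, f (f x) = x) {h : X → ENNReal} (hh : Measurable h) :
    (μ.withDensity h).map f = (μ.map f).withDensity (h ∘ f) := by
  ext s hs
  rw [Measure.map_apply hf hs, withDensity_apply _ (hf hs), withDensity_apply _ hs,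
    setLIntegral_map hs (hh.comp hf) hf]
  simp only [Function.comp, hff]

lemma map_multiFlip [Nonempty S] {σ : ℕ → Site S} (hσ : SepSites σ) {ν : Measure (Seq S)}
    {A : S → S → Bool} {δ : ℝ} {Q : ℤ → S → S → ℝ} {p : ℤ → S → ℝ} (h : Mk ν A δ Q p)
    (hA : ∀ k, (σ k).Adm A) (n : ℕ) :
    ν.map (multiFlip σ n) = ν.withDensity fun x => ENNReal.ofReal (Real.exp (logW σ Q n x)) := by
  induction n with
  | zero =>
    have : multiFlip σ 0 = id := rfl
    rw [this, Measure.map_id]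
    simp [logW]
  | succ n ih =>
    have e : multiFlip σ (n + 1) = (σ n).flip ∘ multiFlip σ n := rfl
    have hm : Measurable fun x => ENNReal.ofReal (Real.exp (logW σ Q n x)) :=
      (Real.measurable_exp.comp (measurable_logW σ Q n)).ennreal_ofReal
    have hm' : Measurable fun x => ENNReal.ofReal (Real.exp ((σ n).D Q * (σ n).sgn x)) :=
      (Real.measurable_exp.comp (((σ n).depOn_sgn.measurable).const_mul _)).ennreal_ofReal
    rw [e, ← Measure.map_map (σ n).measurable_flip (measurable_multiFlip σ n), ih,
      map_withDensity_invol (σ n).measurable_flip (σ n).flip_flip hm, (σ n).map_flip h (hA n),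
      ← withDensity_mul _ hm' (hm.comp (σ n).measurable_flip)]
    congr 1
    funext x
    have e2 : logW σ Q n ((σ n).flip x) = logW σ Q n x := by
      refine Finset.sum_congr rfl fun k hk => ?_
      rw [Site.sgn_flip_of_disj (hσ k n (by simp at hk; omega))]
    simp only [Pi.mul_apply, Function.comp, e2]
    rw [← ENNReal.ofReal_mul (Real.exp_nonneg _), ← Real.exp_add]
    congr 2
    rw [logW, logW, Finset.sum_range_succ, add_comm]

/-- Comparison of the Radon–Nikodym cocycles of `g` for two equivalent measures. -/
lemma rnDeriv_cocycle {X : Type*} [MeasurableSpace X] {μ ν : Measure X} [IsFiniteMeasure μ]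
    [IsFiniteMeasure ν] (h1 : ν ≪ μ) (h2 : μ ≪ ν) {g : X → X} (hg : Measurable g)
    (hgg : ∀ x, g (g x) = x) {ρ ρ' : X → ENNReal} (hρ : Measurable ρ) (hρ' : Measurable ρ')
    (hμ : μ.map g = μ.withDensity ρ) (hν : ν.map g = ν.withDensity ρ') :
    ∀ᵐ x ∂μ, ν.rnDeriv μ (g x) * ρ x / ν.rnDeriv μ x = ρ' x := by
  have hm := Measure.measurable_rnDeriv ν μ
  have e : μ.withDensity (ν.rnDeriv μ) = ν := Measure.withDensity_rnDeriv_eq ν μ h1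
  have key : μ.withDensity (ρ * ν.rnDeriv μ ∘ g)
      = μ.withDensity (ν.rnDeriv μ * ρ') := by
    rw [withDensity_mul _ hρ (hm.comp hg), ← hμ, ← map_withDensity_invol hg hgg hm, e, hν,
      withDensity_mul _ hm hρ', e]
  have key2 := (withDensity_eq_iff_of_sigmaFinite (hρ.mul (hm.comp hg)).aemeasurable
    (hm.mul hρ').aemeasurable).1 key
  filter_upwards [key2, Measure.rnDeriv_lt_top ν μ, Measure.rnDeriv_pos' h2]
    with x hx hlt hpos
  simp only [Pi.mul_apply, Function.comp] at hx
  rw [mul_comm, hx, mul_comm, ENNReal.mul_div_cancel_right hpos.ne' hlt.ne]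

lemma shiftZ_comp (m n : ℤ) : shiftZ (S := S) m ∘ shiftZ n = shiftZ (m + n) := by
  funext x k
  simp [shiftZ, add_assoc]

lemma ac_shiftZ {μ : Measure (Seq S)} (hns : ShiftNonsingular μ) (n : ℤ) :
    μ.map (shiftZ n) ≪ μ ∧ μ ≪ μ.map (shiftZ n) := by
  have h0 : μ.map (shiftZ (S := S) 0) = μ := by
    have : shiftZ (S := S) 0 = id := by funext x k; simp [shiftZ]
    rw [this, Measure.map_id]
  have hmap : ∀ m n : ℤ, (μ.map (shiftZ n)).map (shiftZ m) = μ.map (shiftZ (m + n)) := by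
    intro m n
    rw [Measure.map_map (measurable_shiftZ m) (measurable_shiftZ n), shiftZ_comp]
  obtain ⟨n1, n2⟩ := hns
  have key : ∀ k : ℕ, μ.map (shiftZ (k : ℤ)) ≪ μ ∧ μ ≪ μ.map (shiftZ (k : ℤ)) := by
    intro k
    induction k with
    | zero => simp [h0, Measure.AbsolutelyContinuous.rfl]
    | succ k ih =>
      have e : μ.map (shiftZ ((k + 1 : ℕ) : ℤ)) = (μ.map (shiftZ (S := S) k)).map (shiftZ 1) := by
        rw [hmap]; congr 2; push_cast; ring
      rw [e]
      exact ⟨(ih.1.map (measurable_shiftZ 1)).trans n1, n2.trans (ih.2.map (measurable_shiftZ 1))⟩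
  have key2 : ∀ k : ℕ, μ.map (shiftZ (-(k : ℤ))) ≪ μ ∧ μ ≪ μ.map (shiftZ (-(k : ℤ))) := by
    intro k
    have h1 := (key k).1.map (measurable_shiftZ (S := S) (-(k : ℤ)))
    have h2 := (key k).2.map (measurable_shiftZ (S := S) (-(k : ℤ)))
    rw [hmap, neg_add_cancel, h0] at h1 h2
    exact ⟨h2, h1⟩
  rcases Int.eq_nat_or_neg n with ⟨k, rfl | rfl⟩
  · exact key k
  · exact key2 k

end meas

/-! ### Uniform lower bounds from the Doeblin condition -/

section meas
variable {S : Type*} [Fintype S] [MeasurableSpace S] [MeasurableSingletonClass S]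
variable {ν : Measure (Seq S)} {A : S → S → Bool} {δ : ℝ} {Q : ℤ → S → S → ℝ} {p : ℤ → S → ℝ}

lemma pow_le_prod_Ico (h : Mk ν A δ Q p) {b c : ℤ} {n : ℕ} (hn : c - b ≤ n) (w : Seq S)
    (hw : ∀ k, b ≤ k → k < c → A (w k) (w (k + 1)) = true) :
    δ ^ n ≤ ∏ k ∈ Finset.Ico b c, Q k (w k) (w (k + 1)) := by
  calc δ ^ n ≤ δ ^ (Finset.Ico b c).card := by
        apply pow_le_pow_of_le_one h.δpos.le h.δle
        simp; omega
    _ = ∏ k ∈ Finset.Ico b c, δ := by rw [Finset.prod_const]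
    _ ≤ _ := Finset.prod_le_prod (fun _ _ => h.δpos.le) fun k hk => by
        rw [Finset.mem_Ico] at hk
        exact h.Qpos _ _ _ (hw k hk.1 hk.2)

lemma wt_congr {a b : ℤ} (hab : a ≤ b) {w w' : Seq S} (hw : ∀ k, a ≤ k → k ≤ b → w k = w' k) :
    wt Q p a b w = wt Q p a b w' := by
  rw [wt, wt, hw a le_rfl hab]
  congr 1
  refine Finset.prod_congr rfl fun k hk => ?_
  rw [Finset.mem_Ico] at hk
  rw [hw k hk.1 (by omega), hw (k + 1) (by omega) (by omega)]

/-- The sequences carrying the word `B` of length `len` at `j`. -/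
def wordAt (j : ℤ) (B : ℕ → S) (len : ℕ) : Set (Seq S) := {x | ∀ l : ℕ, l < len → x (j + l) = B l}

lemma depOn_wordAt (j : ℤ) (B : ℕ → S) (len : ℕ) :
    DepOn j (j + len - 1) (· ∈ wordAt j B len) := by
  intro x y hxy
  have : ∀ l : ℕ, l < len → x (j + l) = y (j + l) := fun l hl => hxy _ (by omega) (by omega)
  simp only [wordAt, Set.mem_ofPred_eq, eq_iff_iff]
  exact ⟨fun H l hl => this l hl ▸ H l hl, fun H l hl => this l hl ▸ H l hl⟩

lemma DepOn.inter {a b : ℤ} {U V : Set (Seq S)} (hU : DepOn a b (· ∈ U))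
    (hV : DepOn a b (· ∈ V)) : DepOn a b (· ∈ U ∩ V) := by
  intro x y hxy
  have h1 := hU x y hxy
  have h2 := hV x y hxy
  simp only at h1 h2
  simp only [Set.mem_inter_iff, h1, h2]

/-- Reduction of a lower bound on conditional probabilities to words: it suffices to find, for each
word on `[a, b]`, a longer word of comparable weight inside `E`. -/
lemma le_measure_inter [Nonempty S] (h : Mk ν A δ Q p) {a b : ℤ} (hab : a ≤ b)
    {U E : Set (Seq S)} (hU : DepOn a b (· ∈ U)) {c : ℝ} (hc : 0 ≤ c)
    (H : ∀ w : Seq S, ∃ a' b' w', a' ≤ b' ∧ cyl a' b' w' ⊆ cyl a b w ∩ E ∧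
      c * wt Q p a b w ≤ wt Q p a' b' w') :
    ENNReal.ofReal c * ν U ≤ ν (U ∩ E) := by
  have := measure_le_of_cyl (ν₁ := ENNReal.ofReal c • ν) (ν₂ := ν.restrict E) (fun w => ?_) hU
  · rwa [Measure.restrict_apply hU.measurableSet, Measure.smul_apply, smul_eq_mul] at this
  · obtain ⟨a', b', w', h1, h2, h3⟩ := H w
    rw [Measure.restrict_apply (measurableSet_cyl _ _ _), Measure.smul_apply, smul_eq_mul,
      h.cylEq _ _ hab, ← ENNReal.ofReal_mul hc]
    calc _ ≤ ENNReal.ofReal (wt Q p a' b' w') := ENNReal.ofReal_le_ofReal h3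
      _ = ν (cyl a' b' w') := (h.cylEq _ _ h1 _).symm
      _ ≤ _ := measure_mono h2

variable {M L : ℕ}

lemma forward_bound [Nonempty S] (h : Mk ν A δ Q p) (hM : 1 ≤ M)
    (hprim : ∀ s t : S, ∃ u : ℕ → S,
      u 0 = s ∧ u M = t ∧ ∀ i < M, A (u i) (u (i + 1)) = true)
    {a b : ℤ} (hab : a ≤ b) {U : Set (Seq S)} (hU : DepOn a b (· ∈ U)) {j : ℤ} (hj : b + M ≤ j)
    {B : ℕ → S} {len : ℕ} (h1 : 1 ≤ len) (hl : len ≤ L)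
    (hB : ∀ l : ℕ, l + 1 < len → A (B l) (B (l + 1)) = true) :
    ENNReal.ofReal (δ ^ (M + L)) * ν U ≤ ν (U ∩ wordAt j B len) := by
  refine le_measure_inter h (b := j - M) (by omega) (hU.mono le_rfl (by omega))
    (pow_nonneg h.δpos.le _) fun w => ?_
  obtain ⟨u, u0, uM, hu⟩ := hprim (w (j - M)) (B 0)
  set w' : Seq S := fun k => if k ≤ j - M then w k else if k < j then u (k - (j - M)).toNat
    else B (k - j).toNat with hw'
  have e1 : ∀ k, k ≤ j - M → w' k = w k := fun k hk => by simp only [hw', if_pos hk]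
  have e2 : ∀ l : ℕ, l ≤ M → w' (j - M + l) = u l := by
    intro l hl
    by_cases c1 : l = 0
    · subst c1; simp [hw', u0]
    by_cases c2 : l = M
    · subst c2
      simp [hw', c1, uM]
    have : ¬ (j - M + l ≤ j - M) := by omega
    have h3 : j - M + l < j := by omega
    simp only [hw', if_neg this, if_pos h3]
    congr 1; omega
  have e3 : ∀ l : ℕ, w' (j + l) = B l := by
    intro l
    have : ¬ (j + l ≤ j - M) := by omega
    have h3 : ¬ (j + l < j) := by omega
    simp only [hw', if_neg this, if_neg h3]
    congr 1; omega
  refine ⟨a, j + len - 1, w', by omega, ?_, ?_⟩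
  · intro x hx
    refine ⟨fun k h1 h2 => ?_, fun l hl => ?_⟩
    · rw [hx k h1 (by omega), e1 k h2]
    · rw [hx _ (by omega) (by omega), e3]
  · have hp := pow_le_prod_Ico h (b := j - M) (c := j + len - 1) (n := M + L) (by omega) w' (by
      intro k hk1 hk2
      by_cases hk : k < j
      · obtain ⟨l, rfl⟩ : ∃ l : ℕ, k = j - M + l := ⟨(k - (j - M)).toNat, by omega⟩
        have := e2 (l + 1) (by omega)
        push_cast at this
        rw [e2 l (by omega), add_assoc, this]
        exact hu l (by omega)
      · obtain ⟨l, rfl⟩ : ∃ l : ℕ, k = j + l := ⟨(k - j).toNat, by omega⟩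
        have := e3 (l + 1)
        push_cast at this
        rw [e3 l, add_assoc, this]
        exact hB l (by omega))
    rw [wt_congr (by omega) (fun k _ hk => (e1 k hk).symm)]
    have hn := wt_nonneg h.Qnn h.pnn a (j - M) w'
    rw [mul_comm]
    calc _ ≤ wt Q p a (j - M) w' * ∏ k ∈ Finset.Ico (j - (M : ℤ)) (j + len - 1),
          Q k (w' k) (w' (k + 1)) := mul_le_mul_of_nonneg_left hp hn
      _ = _ := by rw [wt, wt, mul_assoc, prod_Ico_split _ (by omega) (by omega)]

lemma Mk.p_eq (h : Mk ν A δ Q p) (n : ℤ) (s : S) :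
    ENNReal.ofReal (p n s) = ν {x | x n = s} := by
  have := h.cylEq n n le_rfl (fun _ => s)
  simp only [wt, Finset.Ico_self, Finset.prod_empty, mul_one] at this
  rw [← this]
  congr 1
  ext x
  simp only [cyl, Set.mem_ofPred_eq]
  exact ⟨fun H => H n le_rfl le_rfl, fun H k h1 h2 => by rw [le_antisymm h2 h1]; exact H⟩

lemma Mk.p_le (h : Mk ν A δ Q p) (n : ℤ) (s : S) : p n s ≤ 1 := by
  have := h.prob
  have e := h.p_eq n s
  have : ENNReal.ofReal (p n s) ≤ 1 := e ▸ prob_le_one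
  simpa using this

lemma Mk.le_p [Nonempty S] (h : Mk ν A δ Q p) (hM : 1 ≤ M)
    (hprim : ∀ s t : S, ∃ u : ℕ → S,
      u 0 = s ∧ u M = t ∧ ∀ i < M, A (u i) (u (i + 1)) = true) (hL : 1 ≤ L)
    (n : ℤ) (s : S) : δ ^ (M + L) ≤ p n s := by
  have := h.prob
  have key := forward_bound (L := L) h hM hprim (a := n - M) (b := n - M) le_rfl
    (U := Set.univ) (fun _ _ _ => rfl) (j := n) (by omega) (B := fun _ => s) (len := 1) le_rfl hL
    (fun l hl => by omega)
  have e : wordAt n (fun _ => s) 1 = {x : Seq S | x n = s} := by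
    ext x; simp [wordAt]
  rw [Set.univ_inter, e, ← h.p_eq, measure_univ, mul_one,
    ENNReal.ofReal_le_ofReal_iff (h.pnn _ _)] at key
  exact key

lemma backward_bound [Nonempty S] (h : Mk ν A δ Q p) (hM : 1 ≤ M)
    (hprim : ∀ s t : S, ∃ u : ℕ → S,
      u 0 = s ∧ u M = t ∧ ∀ i < M, A (u i) (u (i + 1)) = true)
    {a b : ℤ} (hab : a ≤ b) {U : Set (Seq S)} (hU : DepOn a b (· ∈ U)) {i : ℤ}
    {B : ℕ → S} {len : ℕ} (h1 : 1 ≤ len) (hl : len ≤ L) (hi : i + len - 1 + M ≤ a)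
    (hB : ∀ l : ℕ, l + 1 < len → A (B l) (B (l + 1)) = true) :
    ENNReal.ofReal (δ ^ (M + L) * δ ^ (M + L)) * ν U ≤ ν (U ∩ wordAt i B len) := by
  have hδ := pow_nonneg h.δpos.le (M + L)
  refine le_measure_inter h (a := i + len - 1 + M) (by omega) (hU.mono hi le_rfl)
    (mul_nonneg hδ hδ) fun w => ?_
  set e := i + len - 1 with he
  obtain ⟨u, u0, uM, hu⟩ := hprim (B (len - 1)) (w (e + M))
  set w' : Seq S := fun k => if k ≤ e then B (k - i).toNat else if k < e + M then u (k - e).toNat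
    else w k with hw'
  have e1 : ∀ k, e + M ≤ k → w' k = w k := fun k hk => by
    have h1 : ¬ (k ≤ e) := by omega
    have h2 : ¬ (k < e + M) := by omega
    simp only [hw', if_neg h1, if_neg h2]
  have e2 : ∀ l : ℕ, l ≤ M → w' (e + l) = u l := by
    intro l hl
    by_cases c1 : l = 0
    · subst c1
      have e0 : (e - i).toNat = len - 1 := by omega
      simp [hw', u0, e0]
    by_cases c2 : l = M
    · subst c2
      rw [e1 _ le_rfl, uM]
    have : ¬ (e + l ≤ e) := by omega
    have h3 : e + l < e + M := by omega
    simp only [hw', if_neg this, if_pos h3]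
    congr 1; omega
  have e3 : ∀ l : ℕ, l < len → w' (i + l) = B l := by
    intro l hl
    have : i + l ≤ e := by omega
    simp only [hw', if_pos this]
    congr 1; omega
  refine ⟨i, b, w', by omega, ?_, ?_⟩
  · intro x hx
    refine ⟨fun k h1 h2 => ?_, fun l hl => ?_⟩
    · rw [hx k (by omega) h2, e1 k h1]
    · rw [hx _ (by omega) (by omega), e3 l hl]
  · have hp := pow_le_prod_Ico h (b := i) (c := e + M) (n := M + L) (by omega) w' (by
      intro k hk1 hk2
      by_cases hk : e ≤ k
      · obtain ⟨l, rfl⟩ : ∃ l : ℕ, k = e + l := ⟨(k - e).toNat, by omega⟩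
        have := e2 (l + 1) (by omega)
        push_cast at this
        rw [e2 l (by omega), add_assoc, this]
        exact hu l (by omega)
      · obtain ⟨l, rfl⟩ : ∃ l : ℕ, k = i + l := ⟨(k - i).toNat, by omega⟩
        have := e3 (l + 1) (by omega)
        push_cast at this
        rw [e3 l (by omega), add_assoc, this]
        exact hB l (by omega))
    rw [wt_congr (by omega) (fun k hk _ => (e1 k hk).symm)]
    have q1 := h.p_le (e + M) (w' (e + M))
    have q2 := h.le_p hM hprim (h1.trans hl) i (w' i)
    have q3 : 0 ≤ ∏ k ∈ Finset.Ico (e + M) b, Q k (w' k) (w' (k + 1)) :=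
      Finset.prod_nonneg fun _ _ => h.Qnn _ _ _
    rw [wt, wt, ← prod_Ico_split _ (show i ≤ e + M by omega) (show e + M ≤ b by omega), ← mul_assoc,
      ← mul_assoc]
    refine mul_le_mul_of_nonneg_right ?_ q3
    calc _ ≤ δ ^ (M + L) * δ ^ (M + L) * 1 :=
          mul_le_mul_of_nonneg_left q1 (mul_nonneg hδ hδ)
      _ ≤ _ := by
        rw [mul_one]
        exact mul_le_mul q2 hp hδ (h.pnn _ _)

/-- Conditionally on any word in between, a site is in state `plus` with probability bounded
below. -/
lemma plus_bound [Nonempty S] (h : Mk ν A δ Q p) (hM : 1 ≤ M)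
    (hprim : ∀ s t : S, ∃ u : ℕ → S,
      u 0 = s ∧ u M = t ∧ ∀ i < M, A (u i) (u (i + 1)) = true)
    {a b : ℤ} (hab : a ≤ b) {U : Set (Seq S)} (hU : DepOn a b (· ∈ U)) (σ : Site S)
    (hσ : σ.Adm A) (hl : σ.len ≤ L) (hi : σ.i + σ.len - 1 + M ≤ a) (hj : b + M ≤ σ.j) :
    ENNReal.ofReal (δ ^ (M + L) * (δ ^ (M + L) * δ ^ (M + L))) * ν U ≤ ν (U ∩ σ.plus) := by
  have h1 := backward_bound h hM hprim hab hU σ.len_pos hl hi (fun l hl => (hσ l hl).1)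
  have hd : DepOn σ.i b (· ∈ U ∩ wordAt σ.i σ.B σ.len) :=
    (hU.mono (by have := σ.len_pos; omega) le_rfl).inter
      ((depOn_wordAt _ _ _).mono le_rfl (by omega))
  have h2 := forward_bound h hM hprim (a := σ.i) (by have := σ.len_pos; omega) hd hj
    σ.len_pos hl (fun l hl => (hσ l hl).2)
  have e : U ∩ wordAt σ.i σ.B σ.len ∩ wordAt σ.j σ.B' σ.len = U ∩ σ.plus := by
    ext x
    simp only [Set.mem_inter_iff, wordAt, Site.plus, Set.mem_ofPred_eq, and_assoc]
    exact ⟨fun H => ⟨H.1, fun l hl => ⟨H.2.1 l hl, H.2.2 l hl⟩⟩,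
      fun H => ⟨H.1, fun l hl => (H.2 l hl).1, fun l hl => (H.2 l hl).2⟩⟩
  rw [e] at h2
  rw [ENNReal.ofReal_mul (pow_nonneg h.δpos.le _), mul_assoc]
  exact (mul_le_mul_right h1 _).trans h2

end meas

/-! ### Nonsingularity forces the transition matrices to vary slowly -/

/-- Bessel's inequality for an orthogonal family in the unit ball, in the form needed here. -/
lemma tendsto_inner_of_orthogonal {H ι : Type*} [NormedAddCommGroup H] [InnerProductSpace ℝ H]
    (v : ι → H) (hv : ∀ i j, i ≠ j → inner ℝ (v i) (v j) = 0) (h1 : ∀ i, ‖v i‖ ≤ 1) (x : H) :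
    Tendsto (fun i => inner ℝ (v i) x) cofinite (𝓝 0) := by
  classical
  have hb : ∀ F : Finset ι, ∑ i ∈ F, (inner ℝ (v i) x) ^ 2 ≤ ‖x‖ ^ 2 := by
    intro F
    have h0 : 0 ≤ ‖x - ∑ i ∈ F, (inner ℝ (v i) x) • v i‖ ^ 2 := by positivity
    rw [norm_sub_sq_real] at h0
    have e1 : inner ℝ x (∑ i ∈ F, (inner ℝ (v i) x) • v i) = ∑ i ∈ F, (inner ℝ (v i) x) ^ 2 := by
      rw [inner_sum]
      refine Finset.sum_congr rfl fun i _ => ?_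
      rw [inner_smul_right, real_inner_comm]; ring
    have e2 : ‖∑ i ∈ F, (inner ℝ (v i) x) • v i‖ ^ 2 ≤ ∑ i ∈ F, (inner ℝ (v i) x) ^ 2 := by
      rw [← real_inner_self_eq_norm_sq, sum_inner]
      refine Finset.sum_le_sum fun i hi => ?_
      rw [inner_sum, Finset.sum_eq_single_of_mem i hi]
      · rw [inner_smul_left, inner_smul_right, real_inner_self_eq_norm_sq]
        simp only [conj_trivial]
        have : ‖v i‖ ^ 2 ≤ 1 := pow_le_one₀ (norm_nonneg _) (h1 i)
        nlinarith [sq_nonneg (inner ℝ (v i) x)]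
      · intro j _ hji
        rw [inner_smul_left, inner_smul_right, hv i j hji.symm]
        simp
    rw [e1] at h0
    linarith
  have hs : Summable fun i => (inner ℝ (v i) x) ^ 2 :=
    summable_of_sum_le (fun i => sq_nonneg _) hb
  have ht := hs.tendsto_cofinite_zero
  have := (Real.continuous_sqrt.tendsto 0).comp ht
  simp only [Real.sqrt_zero, Function.comp_def, Real.sqrt_sq_eq_abs] at this
  exact (tendsto_zero_iff_abs_tendsto_zero _).2 this

/-- Bounded orthogonal functions tend weakly to `0` in `L¹`, hence their means tend to `0` under
every absolutely continuous measure. -/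
lemma tendsto_integral_of_orthogonal {X ι : Type*} [MeasurableSpace X] {μ ν : Measure X}
    [IsProbabilityMeasure μ] [IsFiniteMeasure ν] (hνμ : ν ≪ μ) (Y : ι → X → ℝ)
    (hm : ∀ i, Measurable (Y i)) (h1 : ∀ i x, |Y i x| ≤ 1)
    (ho : ∀ i j, i ≠ j → ∫ x, Y i x * Y j x ∂μ = 0) :
    Tendsto (fun i => ∫ x, Y i x ∂ν) cofinite (𝓝 0) := by
  have hY : ∀ i, MemLp (Y i) 2 μ := fun i =>
    MemLp.of_bound (hm i).aestronglyMeasurable 1 (ae_of_all _ fun x => by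
      rw [Real.norm_eq_abs]; exact h1 i x)
  have hin : ∀ (f g : X → ℝ) (hf : MemLp f 2 μ) (hg : MemLp g 2 μ),
      inner ℝ (hf.toLp f) (hg.toLp g) = ∫ x, f x * g x ∂μ := by
    intro f g hf hg
    rw [L2.inner_def]
    refine integral_congr_ae ?_
    filter_upwards [hf.coeFn_toLp, hg.coeFn_toLp] with x h1 h2
    rw [h1, h2]
    simp [mul_comm]
  have hL2 : ∀ g : X → ℝ, MemLp g 2 μ →
      Tendsto (fun i => ∫ x, Y i x * g x ∂μ) cofinite (𝓝 0) := by
    intro g hg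
    have := tendsto_inner_of_orthogonal (fun i => (hY i).toLp (Y i))
      (fun i j hij => by rw [hin]; exact ho i j hij) (fun i => by
        have e : ‖(hY i).toLp (Y i)‖ ^ 2 ≤ 1 := by
          rw [← real_inner_self_eq_norm_sq, hin]
          calc ∫ x, Y i x * Y i x ∂μ ≤ ∫ x, (1 : ℝ) ∂μ := by
                refine integral_mono_of_nonneg (ae_of_all _ fun x => mul_self_nonneg _)
                  (integrable_const _) (ae_of_all _ fun x => ?_)
                have := h1 i x
                rw [abs_le] at this
                nlinarith
            _ = 1 := by simp
        nlinarith [norm_nonneg ((hY i).toLp (Y i))]) (hg.toLp g)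
    simpa only [hin] using this
  set φ : X → ℝ := fun x => (ν.rnDeriv μ x).toReal with hφ
  have hφi : Integrable φ μ := Measure.integrable_toReal_rnDeriv
  have e : ∀ i, ∫ x, Y i x ∂ν = ∫ x, Y i x * φ x ∂μ := by
    intro i
    rw [← integral_rnDeriv_smul hνμ]
    simp only [smul_eq_mul, mul_comm, hφ]
  simp only [e]
  rw [Metric.tendsto_nhds]
  intro ε hε
  obtain ⟨g, hg1, hg2⟩ := (memLp_one_iff_integrable.2 hφi).exists_simpleFunc_eLpNorm_sub_lt
    (by simp) (ε := ENNReal.ofReal (ε / 2)) (by simpa using hε)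
  have hgL2 : MemLp g 2 μ := g.memLp_of_isFiniteMeasure 2 μ
  have hgi : Integrable g μ := memLp_one_iff_integrable.1 hg2
  have hd : ∫ x, |φ x - g x| ∂μ < ε / 2 := by
    rw [eLpNorm_one_eq_lintegral_enorm] at hg1
    have e2 := integral_norm_eq_lintegral_enorm (hφi.sub hgi).aestronglyMeasurable
    simp only [Real.norm_eq_abs, Pi.sub_apply] at e2
    rw [e2]
    have := (ENNReal.toReal_lt_toReal (ne_top_of_lt hg1) ENNReal.ofReal_ne_top).2 hg1
    rwa [ENNReal.toReal_ofReal (by positivity)] at this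
  filter_upwards [(Metric.tendsto_nhds.1 (hL2 g hgL2)) (ε / 2) (by positivity)] with i hi
  rw [Real.dist_eq, sub_zero] at hi ⊢
  have hbdd : ∀ f : X → ℝ, Integrable f μ → Integrable (fun x => Y i x * f x) μ := fun f hf =>
    hf.bdd_mul (c := 1) (hm i).aestronglyMeasurable (ae_of_all _ fun x => by
      rw [Real.norm_eq_abs]; exact h1 i x)
  have e3 : ∫ x, Y i x * φ x ∂μ = ∫ x, Y i x * g x ∂μ + ∫ x, Y i x * (φ x - g x) ∂μ := by
    rw [← integral_add (hbdd _ hgi) (hbdd (fun x => φ x - g x) (hφi.sub hgi))]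
    refine integral_congr_ae (ae_of_all _ fun x => ?_)
    simp only; ring
  have e4 : |∫ x, Y i x * (φ x - g x) ∂μ| ≤ ∫ x, |φ x - g x| ∂μ := by
    refine abs_integral_le_integral_abs.trans (integral_mono (hbdd _ (hφi.sub hgi)).abs
      (hφi.sub hgi).abs fun x => ?_)
    simp only [abs_mul]
    exact mul_le_of_le_one_left (abs_nonneg _) (h1 i x)
  rw [e3]
  calc _ ≤ |∫ x, Y i x * g x ∂μ| + |∫ x, Y i x * (φ x - g x) ∂μ| := abs_add_le _ _
    _ < ε := by linarith

section meas
variable {S : Type*} [Fintype S] [MeasurableSpace S] [MeasurableSingletonClass S]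
variable {ν : Measure (Seq S)} {A : S → S → Bool} {δ : ℝ} {Q : ℤ → S → S → ℝ} {p : ℤ → S → ℝ}

lemma integral_eq_of_cyl [Nonempty S] {a b : ℤ} {ν₁ ν₂ : Measure (Seq S)}
    (h : ∀ w, ν₁ (cyl a b w) = ν₂ (cyl a b w)) {G : Seq S → ℝ} (hG : DepOn a b G) :
    ∫ x, G x ∂ν₁ = ∫ x, G x ∂ν₂ := by
  have key : ∀ ν : Measure (Seq S), ∫ x, G x ∂ν
      = ∫ v, G (extend a b v) ∂(ν.map (restr a b)) := by
    intro ν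
    rw [integral_map (measurable_restr a b).aemeasurable
      (measurable_of_finite _).aestronglyMeasurable]
    exact integral_congr_ae (ae_of_all _ fun x => congrFun hG.eq_comp x)
  rw [key, key, le_antisymm (map_restr_le fun w => (h w).le) (map_restr_le fun w => (h w).ge)]

/-- The set of sequences visiting `s` at time `n` and `t` at time `n + 1`. -/
def edgeSet (n : ℤ) (s t : S) : Set (Seq S) := {x | x n = s ∧ x (n + 1) = t}

lemma measurableSet_edge (n : ℤ) (s t : S) : MeasurableSet (edgeSet n s t) := by
  have h (m : ℤ) (u : S) : MeasurableSet ((fun x : Seq S => x m) ⁻¹' {u}) :=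
    measurable_pi_apply m (measurableSet_singleton u)
  exact (h n s).inter (h (n + 1) t)

lemma measurableSet_vertex (n : ℤ) (s : S) : MeasurableSet {x : Seq S | x n = s} := by
  have h : MeasurableSet ((fun x : Seq S => x n) ⁻¹' {s}) :=
    measurable_pi_apply n (measurableSet_singleton s)
  exact h

/-- The Markov property. -/
lemma Mk.setIntegral_edge [Nonempty S] (h : Mk ν A δ Q p) {a m : ℤ} (ham : a ≤ m) (s t : S)
    {G : Seq S → ℝ} (hG : DepOn a m G) :
    ∫ x in edgeSet m s t, G x ∂ν = Q m s t * ∫ x in {x | x m = s}, G x ∂ν := by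
  have key := integral_eq_of_cyl (ν₁ := ν.restrict (edgeSet m s t))
    (ν₂ := ENNReal.ofReal (Q m s t) • ν.restrict {x | x m = s}) (fun w => ?_) hG
  · rw [key, integral_smul_measure, ENNReal.toReal_ofReal (h.Qnn _ _ _), smul_eq_mul]
  · classical
    rw [Measure.smul_apply, Measure.restrict_apply (measurableSet_cyl _ _ _),
      Measure.restrict_apply (measurableSet_cyl _ _ _), smul_eq_mul]
    by_cases hw : w m = s
    · have e1 : cyl a m w ∩ {x | x m = s} = cyl a m w :=
        Set.inter_eq_left.2 fun x hx => (hx m ham le_rfl).trans hw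
      set w' := Function.update w (m + 1) t with hw'
      have u1 : ∀ k, k ≤ m → w' k = w k := fun k hk =>
        Function.update_of_ne (by omega) _ _
      have u2 : w' (m + 1) = t := Function.update_self _ _ _
      have e2 : cyl a m w ∩ edgeSet m s t = cyl a (m + 1) w' := by
        ext x
        constructor
        · rintro ⟨hx, -, hx2⟩ k h1 h2
          by_cases hk : k = m + 1
          · rw [hk, u2]; exact hx2
          · rw [u1 k (by omega)]; exact hx k h1 (by omega)
        · intro hx
          have hxm : ∀ k, a ≤ k → k ≤ m → x k = w k := fun k h1 h2 => by
            rw [hx k h1 (by omega), u1 k h2]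
          exact ⟨hxm, (hxm m ham le_rfl).trans hw, (hx (m + 1) (by omega) le_rfl).trans u2⟩
      rw [e1, e2, h.cylEq _ _ ham, h.cylEq _ _ (by omega), ← ENNReal.ofReal_mul (h.Qnn _ _ _)]
      congr 1
      rw [← wt_congr ham (fun k _ hk => u1 k hk), wt, wt, ← prod_Ico_split _ ham
        (show m ≤ m + 1 by omega)]
      have : Finset.Ico m (m + 1) = {m} := by ext k; simp; omega
      rw [this, Finset.prod_singleton, u1 m le_rfl, u2, hw]
      ring
    · have e1 : cyl a m w ∩ {x | x m = s} = ∅ := by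
        ext x
        simp only [Set.mem_inter_iff, Set.mem_empty_iff_false, iff_false, not_and]
        exact fun hx hx2 => hw ((hx m ham le_rfl).symm.trans hx2)
      have e2 : cyl a m w ∩ edgeSet m s t = ∅ := by
        ext x
        simp only [Set.mem_inter_iff, Set.mem_empty_iff_false, iff_false, not_and]
        exact fun hx hx2 => hw ((hx m ham le_rfl).symm.trans hx2.1)
      rw [e1, e2]; simp

/-- The martingale difference of the transition from `s` to `t` at time `n`. -/
noncomputable def martDiff (Q : ℤ → S → S → ℝ) (s t : S) (n : ℤ) (x : Seq S) : ℝ :=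
  (edgeSet n s t).indicator 1 x - Q n s t * {x : Seq S | x n = s}.indicator 1 x

lemma depOn_martDiff (Q : ℤ → S → S → ℝ) (s t : S) (n : ℤ) :
    DepOn n (n + 1) (martDiff Q s t n) := by
  classical
  intro x y hxy
  have h1 := hxy n le_rfl (by omega)
  have h2 := hxy (n + 1) (by omega) le_rfl
  simp only [martDiff, edgeSet, Set.indicator_apply, Set.mem_ofPred_eq, Pi.one_apply, h1, h2]

lemma abs_martDiff_le {Q : ℤ → S → S → ℝ} {s t : S} {n : ℤ} (h0 : 0 ≤ Q n s t) (h1 : Q n s t ≤ 1)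
    (x : Seq S) : |martDiff Q s t n x| ≤ 1 := by
  classical
  simp only [martDiff, edgeSet, Set.indicator_apply, Set.mem_ofPred_eq, Pi.one_apply]
  by_cases hs : x n = s <;> by_cases ht : x (n + 1) = t <;> simp [hs, ht, abs_le] <;>
    constructor <;> linarith

lemma integral_mul_martDiff {Q' : ℤ → S → S → ℝ}
    (s t : S) (n : ℤ) {G : Seq S → ℝ} (hG : Integrable G ν) :
    ∫ x, G x * martDiff Q' s t n x ∂ν
      = ∫ x in edgeSet n s t, G x ∂ν - Q' n s t * ∫ x in {x | x n = s}, G x ∂ν := by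
  rw [← integral_indicator (measurableSet_edge n s t),
    ← integral_indicator (measurableSet_vertex n s), ← integral_const_mul,
    ← integral_sub (hG.indicator (measurableSet_edge n s t))
      ((hG.indicator (measurableSet_vertex n s)).const_mul _)]
  refine integral_congr_ae (ae_of_all _ fun x => ?_)
  classical
  simp only [martDiff, Set.indicator_apply, Pi.one_apply]
  split_ifs <;> ring

lemma integral_martDiff_mul [Nonempty S] (h : Mk ν A δ Q p) (hQ1 : ∀ n s t, Q n s t ≤ 1)
    (s t : S) {m n : ℤ} (hmn : m ≠ n) :
    ∫ x, martDiff Q s t m x * martDiff Q s t n x ∂ν = 0 := by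
  have := h.prob
  have key : ∀ m n : ℤ, m < n → ∫ x, martDiff Q s t m x * martDiff Q s t n x ∂ν = 0 := by
    intro m n hmn
    have hd := depOn_martDiff Q s t m
    have hi : Integrable (martDiff Q s t m) ν :=
      (integrable_const (1 : ℝ)).mono' hd.measurable.aestronglyMeasurable
        (ae_of_all _ fun x => by
          rw [Real.norm_eq_abs]; exact abs_martDiff_le (h.Qnn _ _ _) (hQ1 _ _ _) x)
    rw [integral_mul_martDiff s t n hi,
      h.setIntegral_edge hmn.le s t (hd.mono le_rfl (by omega)), sub_self]
  rcases lt_or_gt_of_ne hmn with h | h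
  · exact key m n h
  · simpa only [mul_comm] using key n m h

variable {M : ℕ}

/-- If the shift is nonsingular then consecutive transition matrices are asymptotically equal. -/
lemma tendsto_transition_sub [Nonempty S] (h : Mk ν A δ Q p) (hQ1 : ∀ n s t, Q n s t ≤ 1)
    (hns : ShiftNonsingular ν) (hM : 1 ≤ M)
    (hprim : ∀ s t : S, ∃ u : ℕ → S,
      u 0 = s ∧ u M = t ∧ ∀ i < M, A (u i) (u (i + 1)) = true) (s t : S) :
    Tendsto (fun n : ℤ => Q (n + 1) s t - Q n s t) cofinite (𝓝 0) := by
  have := h.prob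
  have hs := h.shift 1
  have := hs.prob
  have key := tendsto_integral_of_orthogonal (μ := ν) (ν := ν.map (shiftZ 1)) hns.1
    (martDiff Q s t) (fun n => (depOn_martDiff Q s t n).measurable)
    (fun n x => abs_martDiff_le (h.Qnn _ _ _) (hQ1 _ _ _) x)
    (fun m n hmn => integral_martDiff_mul h hQ1 s t hmn)
  have e : ∀ n, ∫ x, martDiff Q s t n x ∂(ν.map (shiftZ 1))
      = (Q (n + 1) s t - Q n s t) * p (n + 1) s := by
    intro n
    have h1 := integral_mul_martDiff (ν := ν.map (shiftZ 1)) (Q' := Q) s t n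
      (integrable_const (1 : ℝ))
    simp only [one_mul] at h1
    rw [h1, hs.setIntegral_edge (le_refl n) s t (G := fun _ => 1) (fun _ _ _ => rfl), ← sub_mul]
    congr 1
    have := hs.p_eq n s
    simp only [integral_const, smul_eq_mul, mul_one, measureReal_restrict_apply MeasurableSet.univ,
      Set.univ_inter, measureReal_def, ← this]
    exact ENNReal.toReal_ofReal (h.pnn _ _)
  have hc : 0 < δ ^ (M + 1) := pow_pos h.δpos _
  have h2 := (key.abs).mul_const ((δ ^ (M + 1))⁻¹)
  rw [abs_zero, zero_mul] at h2
  refine squeeze_zero_norm (fun n => ?_) h2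
  rw [e, abs_mul, Real.norm_eq_abs, ← div_eq_mul_inv, le_div_iff₀ hc]
  refine mul_le_mul_of_nonneg_left ?_ (abs_nonneg _)
  exact (h.le_p hM hprim le_rfl (n + 1) s).trans (le_abs_self _)

lemma tendsto_transition_ratio [Nonempty S] (h : Mk ν A δ Q p) (hQ1 : ∀ n s t, Q n s t ≤ 1)
    (hns : ShiftNonsingular ν) (hM : 1 ≤ M)
    (hprim : ∀ s t : S, ∃ u : ℕ → S,
      u 0 = s ∧ u M = t ∧ ∀ i < M, A (u i) (u (i + 1)) = true) {s t : S} (hst : A s t = true)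
    {i j : ℤ} (hij : i ≤ j) :
    Tendsto (fun n : ℤ => Q (j + -n) s t / Q (i + -n) s t) cofinite (𝓝 1) := by
  have h0 := tendsto_transition_sub h hQ1 hns hM hprim s t
  have hd : ∀ d : ℕ, Tendsto (fun n : ℤ => Q (i + d + -n) s t - Q (i + -n) s t) cofinite (𝓝 0) := by
    intro d
    induction d with
    | zero => simp
    | succ d ih =>
      have hinj : Function.Injective fun n : ℤ => i + d + -n := fun a b hab => by
        simp only at hab; omega
      have := (h0.comp hinj.tendsto_cofinite).add ih
      rw [add_zero] at this
      refine this.congr fun n => ?_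
      simp only [Function.comp]
      have : i + ((d + 1 : ℕ) : ℤ) + -n = i + d + -n + 1 := by push_cast; ring
      rw [this]; ring
  obtain ⟨d, rfl⟩ : ∃ d : ℕ, j = i + d := ⟨(j - i).toNat, by omega⟩
  have h1 : Tendsto (fun n : ℤ => (Q (i + d + -n) s t - Q (i + -n) s t) / Q (i + -n) s t)
      cofinite (𝓝 0) := by
    have h2 := ((hd d).abs).mul_const δ⁻¹
    rw [abs_zero, zero_mul] at h2
    refine squeeze_zero_norm (fun n => ?_) h2
    have hq := h.Qpos (i + -n) s t hst
    have hq0 := h.δpos.trans_le hq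
    rw [norm_div, Real.norm_eq_abs, Real.norm_eq_abs, abs_of_pos hq0, div_eq_mul_inv]
    exact mul_le_mul_of_nonneg_left (inv_anti₀ h.δpos hq) (abs_nonneg _)
  have h3 := h1.add_const 1
  rw [zero_add] at h3
  refine h3.congr fun n => ?_
  have hq0 := h.δpos.trans_le (h.Qpos (i + -n) s t hst)
  field_simp
  ring

/-- The weight change of a site tends to `0` when the transition matrices are shifted away. -/
lemma Site.tendsto_D [Nonempty S] (h : Mk ν A δ Q p) (hQ1 : ∀ n s t, Q n s t ≤ 1)
    (hns : ShiftNonsingular ν) (hM : 1 ≤ M)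
    (hprim : ∀ s t : S, ∃ u : ℕ → S,
      u 0 = s ∧ u M = t ∧ ∀ i < M, A (u i) (u (i + 1)) = true) (σ : Site S) (hσ : σ.Adm A) :
    Tendsto (fun n : ℤ => σ.D (fun k => Q (k + -n))) cofinite (𝓝 0) := by
  have hd := σ.disj
  have key : ∀ U : ℕ → S, (∀ l : ℕ, l + 1 < σ.len → A (U l) (U (l + 1)) = true) →
      Tendsto (fun n : ℤ => wordP (fun k => Q (k + -n)) σ.j U σ.len /
        wordP (fun k => Q (k + -n)) σ.i U σ.len) cofinite (𝓝 1) := by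
    intro U hU
    simp only [wordP, ← Finset.prod_div_distrib]
    have := tendsto_finsetProd (f := fun (l : ℕ) (n : ℤ) =>
      Q (σ.j + l + -n) (U l) (U (l + 1)) / Q (σ.i + l + -n) (U l) (U (l + 1)))
      (a := fun _ => (1 : ℝ)) (x := cofinite) (Finset.range (σ.len - 1)) (fun l hl =>
        tendsto_transition_ratio h hQ1 hns hM hprim (hU l (by simp at hl; omega)) (by omega))
    simpa using this
  have h1 := (key σ.B fun l hl => (hσ l hl).1).div (key σ.B' fun l hl => (hσ l hl).2) one_ne_zero
  rw [div_one] at h1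
  have h2 := (Real.continuousAt_log one_ne_zero).tendsto.comp h1
  rw [Real.log_one] at h2
  refine h2.congr fun n => ?_
  simp only [Function.comp, Pi.div_apply, Site.D]
  congr 1
  rw [div_div_div_eq, mul_comm (wordP _ σ.j σ.B σ.len)]

end meas

/-! ### The exchanges belong to the renormalization pseudo full-group -/

section group
variable {S : Type*} [Fintype S] [MeasurableSpace S] [MeasurableSingletonClass S]
variable {μ : Measure (Seq S)} {A : S → S → Bool} {δ : ℝ} {Q : ℤ → S → S → ℝ} {p : ℤ → S → ℝ}
variable {M L : ℕ}

/-- `multiFlip σ n` is an element of the renormalization pseudo full-group: its Radon–Nikodym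
derivative for `μ ∘ Tᵐ` involves only transition matrices shifted by `m`, and by
`Site.tendsto_D` it tends to `1`. -/
lemma exists_renormPFG [Nonempty S] (h : Mk μ A δ Q p) (hQ1 : ∀ n s t, Q n s t ≤ 1)
    (hns : ShiftNonsingular μ) (hM : 1 ≤ M)
    (hprim : ∀ s t : S, ∃ u : ℕ → S,
      u 0 = s ∧ u M = t ∧ ∀ i < M, A (u i) (u (i + 1)) = true)
    {σ : ℕ → Site S} (hσ : SepSites σ) (hA : ∀ k, (σ k).Adm A) (n : ℕ) :
    ∃ g : RenormPFG μ, g.dom = Set.univ ∧ g.toFun = multiFlip σ n ∧ g.logDeriv = logW σ Q n := by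
  have := h.prob
  have hgg := multiFlip_multiFlip hσ n
  have hg := measurable_multiFlip σ n
  have hρ : ∀ Q : ℤ → S → S → ℝ,
      Measurable fun x => ENNReal.ofReal (Real.exp (logW σ Q n x)) := fun Q =>
    (Real.measurable_exp.comp (measurable_logW σ Q n)).ennreal_ofReal
  refine ⟨{ dom := Set.univ
            toFun := multiFlip σ n
            logDeriv := logW σ Q n
            meas_dom := MeasurableSet.univ
            meas_toFun := hg
            meas_logDeriv := measurable_logW σ Q n
            injOn := (Function.LeftInverse.injective hgg).injOn
            finite_diff := ae_of_all _ fun x => ?_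
            deriv_spec := fun E _ hE => ?_
            renorm := ?_ }, rfl, rfl, rfl⟩
  · refine (Set.finite_iUnion fun m : Fin n =>
      Set.finite_Icc (σ m).i ((σ m).j + (σ m).len)).subset fun k hk => ?_
    by_contra hcon
    refine hk (multiFlip_off n x fun m hm ht => hcon (Set.mem_iUnion.2 ⟨⟨m, hm⟩, ?_⟩))
    have hd := (σ m).disj
    rw [Set.mem_Icc]
    rcases ht with ht | ht <;> constructor <;> simp only <;> omega
  · have e : multiFlip σ n '' E = multiFlip σ n ⁻¹' E :=
      congrFun (Set.image_eq_preimage_of_inverse hgg hgg) E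
    rw [e, ← Measure.map_apply hg hE, map_multiFlip hσ h hA, withDensity_apply _ hE]
  · rw [Measure.restrict_univ]
    have key : ∀ᵐ x ∂μ, ∀ m : ℤ,
        (μ.map (shiftZ (-m))).rnDeriv μ (multiFlip σ n x)
            * ENNReal.ofReal (Real.exp (logW σ Q n x))
          / (μ.map (shiftZ (-m))).rnDeriv μ x
        = ENNReal.ofReal (Real.exp (logW σ (fun k => Q (k + -m)) n x)) := by
      rw [ae_all_iff]
      intro m
      have hm := h.shift (-m)
      have := hm.prob
      exact rnDeriv_cocycle (ac_shiftZ hns (-m)).1 (ac_shiftZ hns (-m)).2 hg hgg (hρ _) (hρ _)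
        (map_multiFlip hσ h hA n) (map_multiFlip hσ hm hA n)
    filter_upwards [key] with x hx
    simp only [hx]
    have h0 : Tendsto (fun m : ℤ => logW σ (fun k => Q (k + -m)) n x) cofinite (𝓝 0) := by
      have := tendsto_finsetSum (Finset.range n) fun k (_ : k ∈ Finset.range n) =>
        ((σ k).tendsto_D h hQ1 hns hM hprim (hA k)).mul_const ((σ k).sgn x)
      simp only [zero_mul, Finset.sum_const_zero] at this
      exact this
    have h1 := ENNReal.tendsto_ofReal ((Real.continuous_exp.tendsto 0).comp h0)
    simpa using h1

end group

/-! ### Exponential decay of the half moment -/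

section decay
variable {S : Type*} [Fintype S] [MeasurableSpace S] [MeasurableSingletonClass S]
variable {ν : Measure (Seq S)} {A : S → S → Bool} {δ : ℝ} {Q : ℤ → S → S → ℝ} {p : ℤ → S → ℝ}
variable {M L : ℕ}

lemma DepOn.integrable [Nonempty S] [IsFiniteMeasure ν] {a b : ℤ} {G : Seq S → ℝ}
    (hG : DepOn a b G) : Integrable G ν := by
  rw [hG.eq_comp]
  exact Integrable.comp_measurable (.of_finite) (measurable_restr a b)

lemma integral_le_of_cyl [Nonempty S] {a b : ℤ} {ν₁ ν₂ : Measure (Seq S)} [IsFiniteMeasure ν₂]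
    (h : ∀ w, ν₁ (cyl a b w) ≤ ν₂ (cyl a b w)) {G : Seq S → ℝ} (hG : DepOn a b G)
    (h0 : ∀ x, 0 ≤ G x) : ∫ x, G x ∂ν₁ ≤ ∫ x, G x ∂ν₂ := by
  have key : ∀ ν : Measure (Seq S), ∫ x, G x ∂ν
      = ∫ v, G (extend a b v) ∂(ν.map (restr a b)) := by
    intro ν
    rw [integral_map (measurable_restr a b).aemeasurable
      (measurable_of_finite _).aestronglyMeasurable]
    exact integral_congr_ae (ae_of_all _ fun x => congrFun hG.eq_comp x)
  rw [key, key]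
  exact integral_mono_measure (map_restr_le h) (ae_of_all _ fun v => h0 _) .of_finite

/-- The lower bound for the conditional probability of `plus` given a window away from the site. -/
noncomputable def plusConst (δ : ℝ) (M L : ℕ) : ℝ := δ ^ (M + L) * (δ ^ (M + L) * δ ^ (M + L))

/-- Multiplying by `exp (D · sgn / 2)` changes the integral of a positive function independent of
the site by `(e^{D/2} - 1) p₊ + (e^{-D/2} - 1) p₋`, where `p₋ = e^D p₊` by invariance under the
exchange; this is `-(e^{D/2} - 1)² p₊`. -/
lemma half_step [Nonempty S] (h : Mk ν A δ Q p) (hM : 1 ≤ M)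
    (hprim : ∀ s t : S, ∃ u : ℕ → S,
      u 0 = s ∧ u M = t ∧ ∀ i < M, A (u i) (u (i + 1)) = true)
    {a b : ℤ} (hab : a ≤ b) {G : Seq S → ℝ} (hG : DepOn a b G) (hG0 : ∀ x, 0 ≤ G x)
    (σ : Site S) (hσ : σ.Adm A) (hl : σ.len ≤ L) (hi : σ.i + σ.len - 1 + M ≤ a)
    (hj : b + M ≤ σ.j) :
    ∫ x, G x * Real.exp (σ.D Q * σ.sgn x / 2) ∂ν
      ≤ (1 - plusConst δ M L * (Real.exp (σ.D Q / 2) - 1) ^ 2) * ∫ x, G x ∂ν := by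
  have := h.prob
  have hlp := σ.len_pos
  have hpm : MeasurableSet σ.plus := σ.depOn_plus.measurableSet
  have hmm : MeasurableSet σ.minus := σ.swap.depOn_plus.measurableSet
  have hGm := hG.measurable
  have hGi : Integrable G ν := hG.integrable
  have hGf : ∀ x, G (σ.flip x) = G x := fun x => hG _ _ fun k h1 h2 =>
    σ.flip_off x (by rintro (ht | ht) <;> omega)
  set D := σ.D Q
  have hminus : ∫ x in σ.minus, G x ∂ν = Real.exp D * ∫ x in σ.plus, G x ∂ν := by
    have e1 : σ.flip ⁻¹' σ.plus = σ.minus := by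
      ext x
      constructor
      · intro hx
        have := σ.flip_mem_minus hx
        rwa [σ.flip_flip] at this
      · exact σ.flip_mem_plus
    have e2 := setIntegral_map (μ := ν) hpm (f := G) hGm.aestronglyMeasurable
      σ.measurable_flip.aemeasurable
    simp only [hGf, e1] at e2
    have hm : Measurable fun x => ENNReal.ofReal (Real.exp (σ.D Q * σ.sgn x)) :=
      (Real.measurable_exp.comp (σ.depOn_sgn.measurable.const_mul _)).ennreal_ofReal
    rw [← e2, σ.map_flip h hσ, setIntegral_withDensity_eq_setIntegral_toReal_smul hm
      (ae_of_all _ fun x => ENNReal.ofReal_lt_top) _ hpm, ← integral_const_mul]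
    refine setIntegral_congr_fun hpm fun x hx => ?_
    simp only [σ.sgn_plus hx, mul_one, smul_eq_mul]
    rw [ENNReal.toReal_ofReal (Real.exp_nonneg _)]
  have hplus : plusConst δ M L * ∫ x, G x ∂ν ≤ ∫ x in σ.plus, G x ∂ν := by
    have hc : 0 ≤ plusConst δ M L := by have := h.δpos; unfold plusConst; positivity
    have := integral_le_of_cyl (ν₁ := ENNReal.ofReal (plusConst δ M L) • ν)
      (ν₂ := ν.restrict σ.plus) (fun w => ?_) hG hG0
    · rwa [integral_smul_measure, ENNReal.toReal_ofReal hc, smul_eq_mul] at this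
    · rw [Measure.restrict_apply (measurableSet_cyl _ _ _), Measure.smul_apply, smul_eq_mul]
      exact plus_bound h hM hprim hab (depOn_cyl a b w) σ hσ hl hi hj
  have e3 : ∫ x, G x * Real.exp (D * σ.sgn x / 2) ∂ν
      = ∫ x, G x ∂ν + ((Real.exp (D / 2) - 1) * ∫ x in σ.plus, G x ∂ν
        + (Real.exp (-(D / 2)) - 1) * ∫ x in σ.minus, G x ∂ν) := by
    have hi1 := (hGi.indicator hpm).const_mul (Real.exp (D / 2) - 1)
    have hi2 := (hGi.indicator hmm).const_mul (Real.exp (-(D / 2)) - 1)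
    have hi3 : Integrable (fun x => (Real.exp (D / 2) - 1) * σ.plus.indicator G x
        + (Real.exp (-(D / 2)) - 1) * σ.minus.indicator G x) ν := hi1.add hi2
    rw [← integral_indicator hpm, ← integral_indicator hmm, ← integral_const_mul,
      ← integral_const_mul, ← integral_add hi1 hi2, ← integral_add hGi hi3]
    refine integral_congr_ae (ae_of_all _ fun x => ?_)
    by_cases hp : x ∈ σ.plus
    · have hm := σ.not_minus hp
      simp only [σ.sgn_plus hp, Set.indicator_of_mem hp, Set.indicator_of_notMem hm, mul_one]
      ring
    · by_cases hm : x ∈ σ.minus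
      · simp only [σ.sgn_minus hm, Set.indicator_of_mem hm, Set.indicator_of_notMem hp]
        rw [show D * -1 / 2 = -(D / 2) by ring]
        ring
      · simp only [σ.sgn_neither hp hm, Set.indicator_of_notMem hm, Set.indicator_of_notMem hp]
        simp
  have e4 : Real.exp D = Real.exp (D / 2) ^ 2 := by
    rw [← Real.exp_nat_mul]; congr 1; push_cast; ring
  have e5 : Real.exp (-(D / 2)) * Real.exp (D / 2) = 1 := by
    rw [← Real.exp_add]; simp
  rw [e3, hminus, e4]
  set u := Real.exp (D / 2)
  set v := Real.exp (-(D / 2))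
  set I := ∫ x, G x ∂ν
  set J := ∫ x in σ.plus, G x ∂ν
  have e6 : I + ((u - 1) * J + (v - 1) * (u ^ 2 * J)) = I - (u - 1) ^ 2 * J := by
    linear_combination (u * J) * e5
  rw [e6]
  nlinarith [mul_le_mul_of_nonneg_left hplus (sq_nonneg (u - 1))]

/-- A sequence of admissible sites placed outward around the windows `[lo k, hi k]`, with gaps at
least `M` between a window and the next site. -/
structure Tower (A : S → S → Bool) (M L : ℕ) (σ : ℕ → Site S) (lo hi : ℕ → ℤ) : Prop where
  adm : ∀ k, (σ k).Adm A
  len_le : ∀ k, (σ k).len ≤ L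
  lo_le_hi : ∀ k, lo k ≤ hi k
  left : ∀ k, (σ k).i + (σ k).len - 1 + M ≤ lo k
  right : ∀ k, hi k + M ≤ (σ k).j
  lo_succ : ∀ k, lo (k + 1) ≤ (σ k).i
  hi_succ : ∀ k, (σ k).j + (σ k).len ≤ hi (k + 1)

variable {σ : ℕ → Site S} {lo hi : ℕ → ℤ}

lemma Tower.lo_anti (t : Tower A M L σ lo hi) : Antitone lo :=
  antitone_nat_of_succ_le fun k => by
    have := t.lo_succ k; have := t.left k; have := (σ k).len_pos; omega

lemma Tower.hi_mono (t : Tower A M L σ lo hi) : Monotone hi :=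
  monotone_nat_of_le_succ fun k => by
    have := t.hi_succ k; have := t.right k; omega

lemma Tower.not_touches (t : Tower A M L σ lo hi) (hM : 1 ≤ M) {n : ℕ} {k : ℤ}
    (h1 : lo n ≤ k) (h2 : k ≤ hi n) {m : ℕ} (hm : n ≤ m) : ¬ (σ m).Touches k := by
  have := t.lo_anti hm
  have := t.hi_mono hm
  have := t.left m
  have := t.right m
  rintro (ht | ht) <;> omega

lemma Tower.touches_mem (t : Tower A M L σ lo hi) {n m : ℕ} (hm : m < n) {k : ℤ}
    (hk : (σ m).Touches k) : lo n ≤ k ∧ k ≤ hi n := by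
  have := t.lo_anti (show m + 1 ≤ n from hm)
  have := t.hi_mono (show m + 1 ≤ n from hm)
  have := t.lo_succ m
  have := t.hi_succ m
  have := (σ m).disj
  rcases hk with ht | ht <;> omega

lemma Tower.sep (t : Tower A M L σ lo hi) (hM : 1 ≤ M) : SepSites σ := by
  intro m n hmn k hm hn
  rcases lt_or_gt_of_ne hmn with hlt | hlt
  · obtain ⟨h1, h2⟩ := t.touches_mem hlt hm
    exact t.not_touches hM h1 h2 le_rfl hn
  · obtain ⟨h1, h2⟩ := t.touches_mem hlt hn
    exact t.not_touches hM h1 h2 le_rfl hm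

lemma Tower.depOn_logW (t : Tower A M L σ lo hi) (Q : ℤ → S → S → ℝ) (n : ℕ) :
    DepOn (lo n) (hi n) (logW σ Q n) := by
  intro x y hxy
  refine Finset.sum_congr rfl fun k hk => ?_
  congr 1
  refine (σ k).sgn_congr fun l hl => ?_
  obtain ⟨h1, h2⟩ := t.touches_mem (Finset.mem_range.1 hk) hl
  exact hxy l h1 h2

/-- The half moments of the cocycle over a window set tend to `0`. -/
lemma Tower.tendsto_half [Nonempty S] (t : Tower A M L σ lo hi) (h : Mk ν A δ Q p) (hM : 1 ≤ M)
    (hprim : ∀ s t : S, ∃ u : ℕ → S,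
      u 0 = s ∧ u M = t ∧ ∀ i < M, A (u i) (u (i + 1)) = true)
    (hD1 : ∀ k, |(σ k).D Q| ≤ 1) (hdiv : ¬ Summable fun k => (σ k).D Q ^ 2)
    {C : Set (Seq S)} (hC : DepOn (lo 0) (hi 0) (· ∈ C)) :
    Tendsto (fun n => ∫ x in C, Real.exp (logW σ Q n x / 2) ∂ν) atTop (𝓝 0) := by
  have := h.prob
  have hCm := hC.measurableSet
  set c := plusConst δ M L with hcdef
  have hc : 0 < c := by have := h.δpos; unfold c plusConst; positivity
  set q : ℕ → ℝ := fun k => (Real.exp ((σ k).D Q / 2) - 1) ^ 2 with hq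
  have hI : ∀ n, 0 ≤ ∫ x in C, Real.exp (logW σ Q n x / 2) ∂ν := fun n =>
    integral_nonneg fun x => Real.exp_nonneg _
  have step : ∀ n, ∫ x in C, Real.exp (logW σ Q (n + 1) x / 2) ∂ν
      ≤ Real.exp (-(c * q n)) * ∫ x in C, Real.exp (logW σ Q n x / 2) ∂ν := by
    intro n
    have hG : DepOn (lo n) (hi n) (C.indicator fun x => Real.exp (logW σ Q n x / 2)) := by
      classical
      intro x y hxy
      have h1 := hC.mono (t.lo_anti (Nat.zero_le n)) (t.hi_mono (Nat.zero_le n)) x y hxy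
      have h2 := t.depOn_logW Q n x y hxy
      simp only at h1
      simp only [Set.indicator_apply, h1, h2]
    have hs := half_step h hM hprim (t.lo_le_hi n) hG
      (fun x => Set.indicator_nonneg (fun x _ => Real.exp_nonneg _) x) (σ n) (t.adm n)
      (t.len_le n) (t.left n) (t.right n)
    have e : ∀ x, C.indicator (fun x => Real.exp (logW σ Q n x / 2)) x
        * Real.exp ((σ n).D Q * (σ n).sgn x / 2)
        = C.indicator (fun x => Real.exp (logW σ Q (n + 1) x / 2)) x := by
      intro x
      by_cases hx : x ∈ C
      · simp only [Set.indicator_of_mem hx, ← Real.exp_add]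
        congr 1
        rw [logW, logW, Finset.sum_range_succ]; ring
      · simp [Set.indicator_of_notMem hx]
    simp only [e] at hs
    rw [integral_indicator hCm, integral_indicator hCm] at hs
    refine hs.trans (mul_le_mul_of_nonneg_right ?_ (hI n))
    have := Real.add_one_le_exp (-(c * q n))
    simp only [hq] at this ⊢
    linarith
  have bound : ∀ n, ∫ x in C, Real.exp (logW σ Q n x / 2) ∂ν
      ≤ Real.exp (-(c * ∑ k ∈ Finset.range n, q k)) * ν.real C := by
    intro n
    induction n with
    | zero => simp [logW]
    | succ n ih =>
      refine (step n).trans ((mul_le_mul_of_nonneg_left ih (Real.exp_nonneg _)).trans (le_of_eq ?_))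
      rw [← mul_assoc, ← Real.exp_add, Finset.sum_range_succ]
      congr 2; ring
  have hqdiv : ¬ Summable q := by
    intro hs
    refine hdiv ((hs.mul_left 16).of_nonneg_of_le (fun k => sq_nonneg _) fun k => ?_)
    -- `|e^y - 1| ≥ |y| / 2` for `|y| ≤ 1 / 2`
    have h1 := hD1 k
    have h2 := Real.abs_exp_sub_one_sub_id_le (x := (σ k).D Q / 2) (by
      rw [abs_div]; norm_num; linarith)
    simp only [hq]
    set y := (σ k).D Q / 2 with hy
    have hyD : (σ k).D Q = 2 * y := by rw [hy]; ring
    rw [hyD] at h1 ⊢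
    rw [abs_le] at h1 h2
    have h3 : |y| / 2 ≤ |Real.exp y - 1| := by
      rcases le_total 0 y with h0 | h0
      · rw [abs_of_nonneg h0]
        exact le_trans (by nlinarith) (le_abs_self _)
      · rw [abs_of_nonpos h0]
        exact le_trans (by nlinarith) (neg_le_abs _)
    have h4 := mul_self_le_mul_self (by positivity) h3
    rw [abs_mul_abs_self] at h4
    nlinarith [abs_mul_abs_self y]
  have hT := (not_summable_iff_tendsto_nat_atTop_of_nonneg fun k => sq_nonneg _).1 hqdiv
  have hT2 := (Real.tendsto_exp_neg_atTop_nhds_zero.comp (hT.const_mul_atTop hc)).mul_const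
    (ν.real C)
  rw [zero_mul] at hT2
  exact squeeze_zero hI bound hT2

end decay

/-! ### Stopping the cocycle near a prescribed value -/

section hitting
variable {S : Type*} [Fintype S] [MeasurableSpace S] [MeasurableSingletonClass S]
variable {ν : Measure (Seq S)} {A : S → S → Bool} {δ : ℝ} {Q : ℤ → S → S → ℝ} {p : ℤ → S → ℝ}
variable {M L : ℕ} {σ : ℕ → Site S} {lo hi : ℕ → ℤ}

/-- The points where the cocycle is within `ε` of `r` after `n` exchanges, for the first time. -/
def firstHit (σ : ℕ → Site S) (Q : ℤ → S → S → ℝ) (r ε : ℝ) (n : ℕ) : Set (Seq S) :=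
  {x | |logW σ Q n x - r| < ε ∧ ∀ m < n, ¬ |logW σ Q m x - r| < ε}

lemma measurableSet_near [Nonempty S] (σ : ℕ → Site S) (Q : ℤ → S → S → ℝ) (r ε : ℝ) (n : ℕ) :
    MeasurableSet {x | |logW σ Q n x - r| < ε} :=
  measurableSet_lt (((measurable_logW σ Q n).sub_const r).norm) measurable_const

lemma measurableSet_firstHit [Nonempty S] (σ : ℕ → Site S) (Q : ℤ → S → S → ℝ) (r ε : ℝ) (n : ℕ) :
    MeasurableSet (firstHit σ Q r ε n) := by
  have : firstHit σ Q r ε n = {x | |logW σ Q n x - r| < ε}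
      ∩ ⋂ m : Fin n, {x | |logW σ Q m x - r| < ε}ᶜ := by
    ext x
    simp only [firstHit, Set.mem_ofPred_eq, Set.mem_inter_iff, Set.mem_iInter, Set.mem_compl_iff]
    exact and_congr_right fun _ => ⟨fun h m => h m m.2, fun h m hm => h ⟨m, hm⟩⟩
  rw [this]
  exact (measurableSet_near σ Q r ε n).inter
    (MeasurableSet.iInter fun m => (measurableSet_near σ Q r ε m).compl)

lemma disjoint_firstHit (σ : ℕ → Site S) (Q : ℤ → S → S → ℝ) (r ε : ℝ) :
    Pairwise (Function.onFun Disjoint (firstHit σ Q r ε)) := by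
  intro m n hmn
  refine Set.disjoint_left.2 fun x hm hn => ?_
  rcases lt_or_gt_of_ne hmn with h | h
  · exact hn.2 m h hm.1
  · exact hm.2 n h hn.1

lemma tsum_firstHit_le [Nonempty S] (σ : ℕ → Site S) (Q : ℤ → S → S → ℝ) (r ε : ℝ)
    {Z : Set (Seq S)} (hZ : MeasurableSet Z) :
    ∑' n, ν (firstHit σ Q r ε n ∩ Z) ≤ ν Z := by
  rw [← measure_iUnion (fun m n hmn => (disjoint_firstHit σ Q r ε hmn).mono
    Set.inter_subset_left Set.inter_subset_left)
    fun n => (measurableSet_firstHit σ Q r ε n).inter hZ]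
  exact measure_mono (Set.iUnion_subset fun n => Set.inter_subset_right)

/-- Since the increments of the cocycle are smaller than `ε`, it cannot jump over the
`ε`-neighbourhood of a negative `r`. -/
lemma exists_firstHit {r ε : ℝ} (hr : r < 0) (hε : ∀ k, |(σ k).D Q| < ε) {n : ℕ} {x : Seq S}
    (hx : logW σ Q n x ≤ r) : ∃ m, x ∈ firstHit σ Q r ε m := by
  classical
  have key : ∃ m, |logW σ Q m x - r| < ε := by
    have hex : ∃ m, logW σ Q m x ≤ r := ⟨n, hx⟩
    obtain ⟨m, hm⟩ : ∃ m, Nat.find hex = m := ⟨_, rfl⟩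
    have h1 := Nat.find_spec hex
    rw [hm] at h1
    cases m with
    | zero => simp [logW] at h1; linarith
    | succ m =>
      have h2 := Nat.find_min hex (m := m) (by omega)
      refine ⟨m + 1, ?_⟩
      have e : logW σ Q (m + 1) x = logW σ Q m x + (σ m).D Q * (σ m).sgn x := by
        rw [logW, logW, Finset.sum_range_succ]
      have hs : |(σ m).sgn x| ≤ 1 := by
        unfold Site.sgn; split_ifs <;> simp
      have h3 : |(σ m).D Q * (σ m).sgn x| < ε := by
        rw [abs_mul]
        exact (mul_le_of_le_one_right (abs_nonneg _) hs).trans_lt (hε m)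
      rw [abs_lt] at h3 ⊢
      push Not at h2
      constructor <;> linarith
  exact ⟨Nat.find key, Nat.find_spec key, fun m hm => Nat.find_min key hm⟩

/-- If no exchange returns `E` to itself with cocycle near `r`, then the part of a window set `C`
where the cocycle ever comes near `r` is controlled by `C \ E`. -/
lemma measure_hit_le [Nonempty S] (t : Tower A M L σ lo hi) (h : Mk ν A δ Q p) (hM : 1 ≤ M)
    {r ε : ℝ} {E C : Set (Seq S)} (hE : MeasurableSet E) (hC : DepOn (lo 0) (hi 0) (· ∈ C))
    (hnull : ∀ n, ν (E ∩ multiFlip σ n ⁻¹' E ∩ {x | |logW σ Q n x - r| < ε}) = 0) :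
    ν (C ∩ ⋃ n, firstHit σ Q r ε n)
      ≤ (1 + ENNReal.ofReal (Real.exp (-r + ε))) * ν (C \ E) := by
  have hsep := t.sep hM
  have hCm := hC.measurableSet
  have hZ : MeasurableSet (C \ E) := hCm.diff hE
  have hgC : ∀ n x, multiFlip σ n x ∈ C ↔ x ∈ C := fun n x =>
    (hC _ _ fun k h1 h2 => multiFlip_off n x fun m _ =>
      t.not_touches hM h1 h2 (Nat.zero_le m)).to_iff
  have hgF : ∀ n x, multiFlip σ n x ∈ firstHit σ Q (-r) ε n ↔ x ∈ firstHit σ Q r ε n := by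
    intro n x
    have e : ∀ m, m ≤ n → |logW σ Q m (multiFlip σ n x) - -r| = |logW σ Q m x - r| := by
      intro m hm
      rw [logW_multiFlip hsep Q hm, ← abs_neg]; congr 1; ring
    simp only [firstHit, Set.mem_ofPred_eq, e n le_rfl]
    exact and_congr_right fun _ => forall₂_congr fun m hm => by rw [e m hm.le]
  have hback : ∀ n, ν (multiFlip σ n ⁻¹' (firstHit σ Q (-r) ε n ∩ (C \ E)))
      ≤ ENNReal.ofReal (Real.exp (-r + ε)) * ν (firstHit σ Q (-r) ε n ∩ (C \ E)) := by
    intro n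
    have hm := (measurableSet_firstHit σ Q (-r) ε n).inter hZ
    rw [← Measure.map_apply (measurable_multiFlip σ n) hm, map_multiFlip hsep h t.adm,
      withDensity_apply _ hm, ← setLIntegral_const]
    refine setLIntegral_mono' hm fun x hx => ?_
    have := hx.1.1
    rw [abs_lt] at this
    exact ENNReal.ofReal_le_ofReal (Real.exp_le_exp.2 (by linarith))
  have hpart : ∀ n, ν (C ∩ firstHit σ Q r ε n) ≤ ν (firstHit σ Q r ε n ∩ (C \ E))
      + ENNReal.ofReal (Real.exp (-r + ε)) * ν (firstHit σ Q (-r) ε n ∩ (C \ E)) := by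
    intro n
    have hsub : C ∩ firstHit σ Q r ε n ⊆ (firstHit σ Q r ε n ∩ (C \ E)
        ∪ multiFlip σ n ⁻¹' (firstHit σ Q (-r) ε n ∩ (C \ E)))
        ∪ (E ∩ multiFlip σ n ⁻¹' E ∩ {x | |logW σ Q n x - r| < ε}) := by
      rintro x ⟨hxC, hxF⟩
      by_cases h1 : x ∈ E
      · by_cases h2 : multiFlip σ n x ∈ E
        · exact Or.inr ⟨⟨h1, h2⟩, hxF.1⟩
        · exact Or.inl (Or.inr ⟨(hgF n x).2 hxF, (hgC n x).2 hxC, h2⟩)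
      · exact Or.inl (Or.inl ⟨hxF, hxC, h1⟩)
    calc _ ≤ _ := measure_mono hsub
      _ ≤ _ := measure_union_le _ _
      _ ≤ (_ + _) + 0 := add_le_add (measure_union_le _ _) (hnull n).le
      _ ≤ _ := by rw [add_zero]; exact add_le_add le_rfl (hback n)
  rw [Set.inter_iUnion]
  calc _ ≤ ∑' n, ν (C ∩ firstHit σ Q r ε n) := measure_iUnion_le _
    _ ≤ ∑' n, (ν (firstHit σ Q r ε n ∩ (C \ E))
        + ENNReal.ofReal (Real.exp (-r + ε)) * ν (firstHit σ Q (-r) ε n ∩ (C \ E))) :=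
      ENNReal.tsum_le_tsum hpart
    _ ≤ ν (C \ E) + ENNReal.ofReal (Real.exp (-r + ε)) * ν (C \ E) := by
      rw [ENNReal.tsum_add, ENNReal.tsum_mul_left]
      exact add_le_add (tsum_firstHit_le σ Q r ε hZ)
        (mul_le_mul_right (tsum_firstHit_le σ Q (-r) ε hZ) _)
    _ = _ := by rw [add_mul, one_mul]

/-- For `r < 0` the cocycle comes within `ε` of `r` almost everywhere on a window set. -/
lemma measure_le_hit [Nonempty S] (t : Tower A M L σ lo hi) (h : Mk ν A δ Q p) (hM : 1 ≤ M)
    (hprim : ∀ s t : S, ∃ u : ℕ → S,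
      u 0 = s ∧ u M = t ∧ ∀ i < M, A (u i) (u (i + 1)) = true)
    (hD1 : ∀ k, |(σ k).D Q| ≤ 1) (hdiv : ¬ Summable fun k => (σ k).D Q ^ 2)
    {r ε : ℝ} (hr : r < 0) (hε : ∀ k, |(σ k).D Q| < ε)
    {C : Set (Seq S)} (hC : DepOn (lo 0) (hi 0) (· ∈ C)) :
    ν.real C ≤ ν.real (C ∩ ⋃ n, firstHit σ Q r ε n) := by
  have := h.prob
  have hCm := hC.measurableSet
  have ht := (t.tendsto_half h hM hprim hD1 hdiv hC).const_mul (Real.exp (-(r / 2)))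
  have ht2 := ht.const_add (ν.real (C ∩ ⋃ n, firstHit σ Q r ε n))
  rw [mul_zero, add_zero] at ht2
  refine ge_of_tendsto' ht2 fun n => ?_
  have hbad : MeasurableSet {x | r < logW σ Q n x} :=
    measurableSet_lt measurable_const (measurable_logW σ Q n)
  have hexp : Integrable (fun x => Real.exp (logW σ Q n x / 2)) ν := by
    have hd : DepOn (lo n) (hi n) (fun x => Real.exp (logW σ Q n x / 2)) := fun x y hxy => by
      simp only [t.depOn_logW Q n x y hxy]
    exact hd.integrable
  have hcheb : ν.real (C ∩ {x | r < logW σ Q n x})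
      ≤ Real.exp (-(r / 2)) * ∫ x in C, Real.exp (logW σ Q n x / 2) ∂ν := by
    have h1 : Real.exp (r / 2) * ν.real (C ∩ {x | r < logW σ Q n x})
        ≤ ∫ x in C, Real.exp (logW σ Q n x / 2) ∂ν := by
      calc _ = ∫ x in C ∩ {x | r < logW σ Q n x}, Real.exp (r / 2) ∂ν := by
            rw [setIntegral_const, smul_eq_mul, mul_comm]
        _ ≤ ∫ x in C ∩ {x | r < logW σ Q n x}, Real.exp (logW σ Q n x / 2) ∂ν := by
            refine setIntegral_mono_on (integrable_const _).integrableOn hexp.integrableOn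
              (hCm.inter hbad) fun x hx => Real.exp_le_exp.2 ?_
            have : r < logW σ Q n x := hx.2
            linarith
        _ ≤ _ := setIntegral_mono_set hexp.integrableOn
            (ae_of_all _ fun x => Real.exp_nonneg _) Set.inter_subset_left.eventuallyLE
    rw [Real.exp_neg, ← div_eq_inv_mul, le_div_iff₀ (Real.exp_pos _), mul_comm]
    exact h1
  have hsub : C ⊆ (C ∩ ⋃ n, firstHit σ Q r ε n) ∪ (C ∩ {x | r < logW σ Q n x}) := by
    intro x hx
    by_cases hxr : r < logW σ Q n x
    · exact Or.inr ⟨hx, hxr⟩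
    · obtain ⟨m, hm⟩ := exists_firstHit hr hε (not_lt.1 hxr)
      exact Or.inl ⟨hx, Set.mem_iUnion.2 ⟨m, hm⟩⟩
  calc _ ≤ _ := measureReal_mono hsub
    _ ≤ _ := measureReal_union_le _ _
    _ ≤ _ := add_le_add le_rfl hcheb

lemma exists_window_approx [IsProbabilityMeasure ν] {E : Set (Seq S)} (hE : MeasurableSet E)
    (hE0 : 0 < ν E) {K : ℝ} (hK : 0 ≤ K) :
    ∃ (C : Set (Seq S)) (m : ℕ), DepOn (-(m : ℤ)) m (· ∈ C) ∧
      (1 + K) * ν.real (C \ E) < ν.real C := by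
  have hE1 : 0 < ν.real E := ENNReal.toReal_pos hE0.ne' (measure_ne_top _ _)
  have hdense := Measure.MeasureDense.of_generateFrom_isSetAlgebra_finite ν
    (isSetAlgebra_measurableCylinders (α := fun _ : ℤ => S)) generateFrom_measurableCylinders.symm
  have hκ : 0 < ν.real E / (2 + K) := by positivity
  obtain ⟨C, hC, hEC⟩ := hdense.approx E hE (measure_ne_top _ _) _ hκ
  obtain ⟨m, hm⟩ := exists_depOn_of_mem_measurableCylinders hC
  refine ⟨C, m, hm, ?_⟩
  have h1 : ν.real (symmDiff E C) < ν.real E / (2 + K) := by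
    rw [measureReal_def]
    exact ENNReal.toReal_lt_of_lt_ofReal hEC
  have h2 : ν.real (C \ E) ≤ ν.real (symmDiff E C) :=
    measureReal_mono Set.subset_union_right
  have h3 : ν.real E ≤ ν.real C + ν.real (symmDiff E C) := by
    refine (measureReal_mono fun x hx => ?_).trans (measureReal_union_le _ _)
    by_cases hxC : x ∈ C
    · exact Or.inl hxC
    · exact Or.inr (Or.inl ⟨hx, hxC⟩)
  rw [lt_div_iff₀ (by positivity)] at h1
  have h4 := mul_le_mul_of_nonneg_left h2 (show 0 ≤ 1 + K by positivity)
  nlinarith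

end hitting

/-! ### Every real number is an essential value -/

section final
variable {S : Type*} [Fintype S] [MeasurableSpace S] [MeasurableSingletonClass S]
variable {μ : Measure (Seq S)} {A : S → S → Bool} {δ : ℝ} {Q : ℤ → S → S → ℝ} {p : ℤ → S → ℝ}
variable {M L : ℕ}

/-- Negative numbers are attained along towers, provided that towers with small and
non-square-summable weights exist around every window. -/
lemma exists_return_of_neg [Nonempty S] (h : Mk μ A δ Q p) (hM : 1 ≤ M)
    (hprim : ∀ s t : S, ∃ u : ℕ → S,
      u 0 = s ∧ u M = t ∧ ∀ i < M, A (u i) (u (i + 1)) = true)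
    (htower : ∀ (m : ℕ) (η : ℝ), 0 < η → ∃ (σ : ℕ → Site S) (lo hi : ℕ → ℤ),
      Tower A M L σ lo hi ∧ lo 0 ≤ -(m : ℤ) ∧ (m : ℤ) ≤ hi 0 ∧ (∀ k, |(σ k).D Q| < η) ∧
        ¬ Summable fun k => (σ k).D Q ^ 2)
    {E : Set (Seq S)} (hE : MeasurableSet E) (hE0 : 0 < μ E) {r ε : ℝ} (hr : r < 0) (hε : 0 < ε) :
    ∃ (σ : ℕ → Site S) (n : ℕ), SepSites σ ∧ (∀ k, (σ k).Adm A) ∧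
      0 < μ (E ∩ multiFlip σ n ⁻¹' E ∩ {x | |logW σ Q n x - r| < ε}) := by
  have := h.prob
  obtain ⟨C, m, hC, hCE⟩ := exists_window_approx hE hE0 (Real.exp_nonneg (-r + ε))
  obtain ⟨σ, lo, hi, t, hlo, hhi, hD, hdiv⟩ := htower m (min ε 1) (by positivity)
  have hC' := hC.mono hlo hhi
  refine ⟨σ, ?_⟩
  by_contra! hcon
  have hnull : ∀ n, μ (E ∩ multiFlip σ n ⁻¹' E ∩ {x | |logW σ Q n x - r| < ε}) = 0 := fun n =>
    le_antisymm (hcon n (t.sep hM) t.adm) zero_le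
  have h1 := measure_hit_le t h hM hE hC' hnull
  have h2 := measure_le_hit t h hM hprim (fun k => ((hD k).trans_le (min_le_right _ _)).le) hdiv hr
    (fun k => (hD k).trans_le (min_le_left _ _)) hC'
  have h3 := ENNReal.toReal_mono (ENNReal.mul_ne_top (by simp) (measure_ne_top _ _)) h1
  rw [ENNReal.toReal_mul, ENNReal.toReal_add (by simp) (by simp),
    ENNReal.toReal_ofReal (Real.exp_nonneg _), ENNReal.toReal_one] at h3
  exact absurd (h2.trans h3) (not_le.2 hCE)

end final

/-- **Markovian Araki–Woods lemma (convergent case).**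
For a topologically mixing (with `A^M > 0`) Markov SFT with the Doeblin
condition and nonsingular shift, if there is an admissible configuration
`(B_k(i_k), B'_k(j_k))` whose sequence
`D_k = log(P_{i_k}(B'_k) P_{j_k}(B_k) / (P_{i_k}(B_k) P_{j_k}(B'_k)))`
satisfies `D_k → 0` and `Σ D_k² = ∞`, then `e(𝓡_A) = ℝ`. -/
theorem ratioSet_renorm_eq_univ_of_admissible_configuration
    {S : Type*} [Fintype S] [MeasurableSpace S] [MeasurableSingletonClass S]
    (A : S → S → Bool)
    (P : ℤ → S → S → ℝ) (π : ℤ → S → ℝ) (μ : Measure (Seq S))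
    (hμ : IsMarkovMeasure μ A P π) (hD : Doeblin A P)
    (hns : ShiftNonsingular μ)
    (M : ℕ) (hM : 1 ≤ M)
    (hprim : ∀ s t : S, ∃ u : ℕ → S,
      u 0 = s ∧ u M = t ∧ ∀ i < M, A (u i) (u (i + 1)) = true)
    -- the admissible configuration
    (L : ℕ) (hL : 1 ≤ L)
    (Bk B'k : ℕ → ℕ → S) (len : ℕ → ℕ)
    (hlen : ∀ k, 1 ≤ len k ∧ len k ≤ L)
    (hBadm : ∀ k, ∀ l : ℕ, l + 1 < len k → A (Bk k l) (Bk k (l + 1)) = true)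
    (hB'adm : ∀ k, ∀ l : ℕ, l + 1 < len k → A (B'k k l) (B'k k (l + 1)) = true)
    (hfirst : ∀ k, Bk k 0 = B'k k 0)
    (hlast : ∀ k, Bk k (len k - 1) = B'k k (len k - 1))
    (hne : ∀ k, ∃ l < len k, Bk k l ≠ B'k k l)
    (jj : ℕ → ℤ) (hjpos : ∀ k, 1 ≤ jj k)
    (hjgap : ∀ k, (L : ℤ) + (M : ℤ) ≤ jj (k + 1) - jj k)
    (ii : ℕ → ℤ) (hineg : ∀ k, ii k ≤ -1)
    (higap : ∀ k, (L : ℤ) + (M : ℤ) ≤ ii k - ii (k + 1))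
    -- the sequence D
    (D : ℕ → ℝ)
    (hDdef : ∀ k, D k = Real.log
      (wordP P (ii k) (B'k k) (len k) * wordP P (jj k) (Bk k) (len k) /
        (wordP P (ii k) (Bk k) (len k) * wordP P (jj k) (B'k k) (len k))))
    (hD0 : Tendsto D atTop (𝓝 0))
    (hDdiv : ¬ Summable (fun k => D k ^ 2)) :
    ∀ r : ℝ, IsEssentialValueRenorm μ r := by
  obtain ⟨δ, h⟩ := hμ.mk' hD
  have := h.prob
  have hnS : Nonempty S := by
    obtain ⟨x⟩ : Nonempty (Seq S) := nonempty_of_isProbabilityMeasure μ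
    exact ⟨x 0⟩
  have hQ1 : ∀ n s t, P n s t ≤ 1 := by
    intro n s t
    rw [← (hμ.stochastic n).2 s]
    exact Finset.single_le_sum (fun t _ => (hμ.stochastic n).1 s t) (Finset.mem_univ t)
  have hi : ∀ k : ℕ, ii k ≤ -(k : ℤ) := by
    intro k
    induction k with
    | zero => have := hineg 0; simp; omega
    | succ k ih => have := higap k; push_cast; omega
  have hj : ∀ k : ℕ, (k : ℤ) ≤ jj k := by
    intro k
    induction k with
    | zero => have := hjpos 0; simp; omega
    | succ k ih => have := hjgap k; push_cast; omega
  -- the tail of the configuration starting at a large index forms a tower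
  have htower : ∀ (m : ℕ) (η : ℝ), 0 < η → ∃ (σ : ℕ → Site S) (lo hi : ℕ → ℤ),
      Tower A M L σ lo hi ∧ lo 0 ≤ -(m : ℤ) ∧ (m : ℤ) ≤ hi 0 ∧ (∀ k, |(σ k).D P| < η) ∧
        ¬ Summable fun k => (σ k).D P ^ 2 := by
    intro m η hη
    obtain ⟨N₀, hN₀⟩ := Metric.tendsto_atTop.1 hD0 η hη
    set N := max N₀ (m + L + M) with hN
    have hN1 : N₀ ≤ N := le_max_left _ _
    have hN2 : m + L + M ≤ N := le_max_right _ _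
    let σ : ℕ → Site S := fun k =>
      { i := ii (N + k), j := jj (N + k), len := len (N + k), B := Bk (N + k), B' := B'k (N + k)
        len_pos := (hlen _).1, first := hfirst _, last := hlast _, ne := hne _
        disj := by
          have := hi (N + k); have := hj (N + k); have := (hlen (N + k)).2
          push_cast at *; omega }
    have hσD : ∀ k, (σ k).D P = D (N + k) := fun k => (hDdef (N + k)).symm
    refine ⟨σ, fun k => ii (N + k) + L + M - 1, fun k => jj (N + k) - M,
      ⟨fun k l hl => ⟨hBadm _ l hl, hB'adm _ l hl⟩, fun k => (hlen _).2, fun k => ?_, fun k => ?_,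
        fun k => ?_, fun k => ?_, fun k => ?_⟩, ?_, ?_, fun k => ?_, ?_⟩
    · have := hi (N + k); have := hj (N + k)
      push_cast at *; omega
    · have := (hlen (N + k)).2
      simp only [σ]; omega
    · simp only [σ]; omega
    · have := higap (N + k)
      simp only [σ, ← add_assoc]; omega
    · have := hjgap (N + k); have := (hlen (N + k)).2
      simp only [σ, ← add_assoc]; omega
    · have := hi (N + 0)
      push_cast at *; omega
    · have := hj (N + 0)
      push_cast at *; omega
    · rw [hσD]
      have := hN₀ (N + k) (by omega)
      rwa [Real.dist_eq, sub_zero] at this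
    · simp only [hσD]
      intro hs
      refine hDdiv ((summable_nat_add_iff N).1 (hs.congr fun k => ?_))
      rw [add_comm]
  intro r E hE hE0 ε hε
  -- it suffices to find a tower and a number of exchanges
  suffices hex : ∃ (σ : ℕ → Site S) (n : ℕ), SepSites σ ∧ (∀ k, (σ k).Adm A) ∧
      0 < μ (E ∩ multiFlip σ n ⁻¹' E ∩ {x | |logW σ P n x - r| < ε}) by
    obtain ⟨σ, n, hσ, hA, hpos⟩ := hex
    obtain ⟨g, h1, h2, h3⟩ := exists_renormPFG h hQ1 hns hM hprim hσ hA n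
    refine ⟨g, ?_⟩
    rwa [h1, h2, h3, Set.inter_univ]
  rcases lt_trichotomy r 0 with hr | rfl | hr
  · exact exists_return_of_neg h hM hprim htower hE hE0 hr hε
  · obtain ⟨σ, lo, hi, t, -⟩ := htower 0 1 one_pos
    refine ⟨σ, 0, t.sep hM, t.adm, ?_⟩
    have e : E ∩ multiFlip σ 0 ⁻¹' E ∩ {x | |logW σ P 0 x - 0| < ε} = E := by
      ext x
      simp [multiFlip, logW, hε]
    rwa [e]
  · -- the exchanges are involutions reversing the sign of the cocycle
    obtain ⟨σ, n, hσ, hA, hpos⟩ :=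
      exists_return_of_neg h hM hprim htower hE hE0 (neg_neg_of_pos hr) hε
    refine ⟨σ, n, hσ, hA, pos_iff_ne_zero.2 fun h0 => hpos.ne' ?_⟩
    have hmeas : MeasurableSet (E ∩ multiFlip σ n ⁻¹' E ∩ {x | |logW σ P n x - r| < ε}) :=
      (hE.inter (measurable_multiFlip σ n hE)).inter (measurableSet_near σ P r ε n)
    have hac : μ.map (multiFlip σ n) ≪ μ := by
      rw [map_multiFlip hσ h hA]; exact withDensity_absolutelyContinuous _ _
    have h1 := hac h0
    rw [Measure.map_apply (measurable_multiFlip σ n) hmeas] at h1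
    rw [← h1]
    congr 1
    ext x
    simp only [Set.mem_inter_iff, Set.mem_preimage, Set.mem_ofPred_eq, multiFlip_multiFlip hσ,
      logW_multiFlip hσ P le_rfl]
    have : |-logW σ P n x - r| = |logW σ P n x - -r| := by rw [← abs_neg]; congr 1; ring
    rw [this]
    tauto

end MarkovSFT
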